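/- arXiv:0804.2722 — 12 statements merged into one kernel-verified Lean document; each statement's English description precedes it below -/
import Mathlib

section
/- For every nontrivial group homomorphism θ from the norm-one subgroup μ_{q+1} = {λ ∈ K : λ^{q+1} = 1} to ℂˣ, the ℂ-vector space W_θ := {f : K × K → ℂ | f(λ⁻¹e₁, λ⁻¹e₂) = θ(λ)·f(e₁,e₂) for all λ ∈ μ_{q+1} and all (e₁,e₂) ∈ K × K} has dimension (q−1)(q²+1) over ℂ. -/
/-- The `θ`-isotypic subspace `W_θ` of functions on `K × K`, for a character `θ` of the
norm-one subgroup `μ_{q+1} = rootsOfUnity (q+1) K`: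
`f (λ⁻¹ e₁, λ⁻¹ e₂) = θ λ * f (e₁, e₂)` for all `λ ∈ μ_{q+1}`. -/
noncomputable def Wtheta (q : ℕ) (K : Type) [Field K]
    (θ : rootsOfUnity (q + 1) K →* ℂˣ) : Submodule ℂ (K × K → ℂ) where
  carrier := {f | ∀ (l : rootsOfUnity (q + 1) K) (e₁ e₂ : K),
    f ((((l : Kˣ)⁻¹ : Kˣ) : K) * e₁, (((l : Kˣ)⁻¹ : Kˣ) : K) * e₂) = (θ l : ℂ) * f (e₁, e₂)}
  add_mem' := by
    intro f g hf hg l e₁ e₂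
    simp only [Set.mem_setOf_eq] at *
    simp only [Pi.add_apply, hf l e₁ e₂, hg l e₁ e₂]
    ring
  zero_mem' := by intro l e₁ e₂; simp
  smul_mem' := by
    intro c f hf l e₁ e₂
    simp only [Set.mem_setOf_eq] at *
    simp only [Pi.smul_apply, smul_eq_mul, hf l e₁ e₂]
    ring

/-- The permutation representation of `G` on functions on `X`, twisted by the inverse of the
character `θ`. -/
noncomputable def twistedPermRep {G X : Type*} [Group G] [MulAction G X] (θ : G →* ℂˣ) :
    Representation ℂ G (X → ℂ) where
  toFun g := ((θ g)⁻¹ : ℂˣ).val • LinearMap.funLeft ℂ ℂ (g⁻¹ • · : X → X)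
  map_one' := by
    ext f x
    simp [LinearMap.funLeft_apply]
  map_mul' g h := by
    ext f x
    simp [LinearMap.funLeft_apply, mul_smul]

theorem twistedPermRep_apply {G X : Type*} [Group G] [MulAction G X] (θ : G →* ℂˣ)
    (g : G) (f : X → ℂ) (x : X) :
    twistedPermRep θ g f x = (θ g : ℂ)⁻¹ * f (g⁻¹ • x) := by
  simp [twistedPermRep, LinearMap.funLeft_apply]

theorem trace_twistedPermRep {G X : Type*} [Group G] [MulAction G X] [Fintype X]
    (θ : G →* ℂˣ) (g : G) :
    LinearMap.trace ℂ (X → ℂ) (twistedPermRep θ g) =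
      (θ g : ℂ)⁻¹ * Nat.card (MulAction.fixedBy X g) := by
  classical
  rw [LinearMap.trace_eq_matrix_trace ℂ (Pi.basisFun ℂ X), Matrix.trace]
  simp [twistedPermRep_apply, Pi.single_apply, Fintype.card_subtype, inv_smul_eq_iff,
    Finset.sum_ite, eq_comm (b := g • _), mul_comm]

theorem card_rootsOfUnity_succ {q : ℕ} (K : Type*) [Field K] [Fintype K]
    (hK : Fintype.card K = q ^ 2) : Nat.card (rootsOfUnity (q + 1) K) = q + 1 := by
  have hker : rootsOfUnity (q + 1) K = (powMonoidHom (q + 1) : Kˣ →* Kˣ).ker := by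
    ext
    simp [mem_rootsOfUnity, MonoidHom.mem_ker]
  have hcard : Nat.card Kˣ = (q + 1) * (q - 1) := by
    rw [Nat.card_units, Nat.card_eq_fintype_card, hK, ← Nat.sq_sub_sq, one_pow]
  rw [hker, IsCyclic.card_powMonoidHom_ker, hcard, Nat.gcd_mul_right_left]

theorem card_fixedBy_prod {n : ℕ} (K : Type*) [Field K] {l : rootsOfUnity n K} (hl : l ≠ 1) :
    Nat.card (MulAction.fixedBy (K × K) l) = 1 := by
  have hl' : ((l : Kˣ) : K) ≠ 1 := by
    simpa using hl
  have hfix : MulAction.fixedBy (K × K) l = {0} := by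
    ext ⟨a, b⟩
    simp [MulAction.mem_fixedBy, Subgroup.smul_def, Units.smul_def, mul_left_eq_self₀, hl']
  simp [hfix]

theorem Wtheta_eq_invariants (q : ℕ) (K : Type) [Field K]
    (θ : rootsOfUnity (q + 1) K →* ℂˣ) :
    Wtheta q K θ = (twistedPermRep (X := K × K) θ).invariants := by
  ext f
  simp only [Representation.mem_invariants, funext_iff, twistedPermRep_apply, Prod.forall,
    inv_mul_eq_iff_eq_mul₀ (Units.ne_zero _)]
  rfl

/-- For every nontrivial character `θ` of the norm-one subgroup `μ_{q+1}` of a field `K`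
with `q²` elements (`q` an odd prime power), the space `W_θ` has dimension `(q-1)(q²+1)`. -/
theorem dim_Wtheta (q : ℕ) (hq : ∃ p n : ℕ, p.Prime ∧ Odd p ∧ 0 < n ∧ q = p ^ n)
    (K : Type) [Field K] [Fintype K] (hK : Fintype.card K = q ^ 2)
    (θ : rootsOfUnity (q + 1) K →* ℂˣ) (hθ : θ ≠ 1) :
    Module.finrank ℂ (Wtheta q K θ) = (q - 1) * (q ^ 2 + 1) := by
  classical
  have : Fintype (rootsOfUnity (q + 1) K) := Fintype.ofFinite _
  have hq1 : 1 ≤ q := by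
    obtain ⟨p, n, hp, -, -, rfl⟩ := hq
    exact Nat.one_le_pow _ _ hp.pos
  have hsum : ∑ l : rootsOfUnity (q + 1) K, (θ l : ℂ)⁻¹ = 0 := by
    have h := sum_hom_units_eq_zero ((Units.coeHom ℂ).comp θ⁻¹) fun h => hθ <| by
      ext l
      simpa using DFunLike.congr_fun h l
    simpa using h
  have hterm (l : rootsOfUnity (q + 1) K) :
      (θ l : ℂ)⁻¹ * Nat.card (MulAction.fixedBy (K × K) l) =
        (θ l : ℂ)⁻¹ + if l = 1 then (q : ℂ) ^ 4 - 1 else 0 := by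
    split_ifs with hl
    · subst hl
      simp [MulAction.fixedBy, hK]
      ring
    · rw [card_fixedBy_prod K hl]
      simp
  have hG : (Nat.card (rootsOfUnity (q + 1) K) : ℂ) ≠ 0 :=
    Nat.cast_ne_zero.mpr Nat.card_pos.ne'
  have := invertibleOfNonzero hG
  have key := (twistedPermRep (X := K × K) θ).card_inv_mul_sum_char_eq_finrank
  rw [inv_mul_eq_iff_eq_mul₀ hG] at key
  simp only [Representation.character, trace_twistedPermRep, hterm, Finset.sum_add_distrib, hsum, Finset.sum_ite_eq',
    Finset.mem_univ, if_true, zero_add, card_rootsOfUnity_succ K hK] at key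
  rw [Wtheta_eq_invariants, ← Nat.cast_inj (R := ℂ)]
  refine mul_left_cancel₀ (Nat.cast_ne_zero.mpr q.succ_ne_zero) (key.symm.trans ?_)
  push_cast [hq1]
  ring
end

section
/- The ℂ-vector space W₁⁺ := {f : K × K → ℂ | f(λe₁, λe₂) = f(e₁,e₂) for all λ ∈ μ_{q+1}, and f(e₁^q, e₂^q) = f(e₁,e₂) for all (e₁,e₂) ∈ K × K} has dimension q(q²+1)/2 over ℂ. -/
/-- The subspace `W₁⁺` of functions on `K × K` invariant under the norm-one subgroup
`μ_{q+1}` and invariant under the coordinatewise Frobenius `(e₁, e₂) ↦ (e₁^q, e₂^q)`. -/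
noncomputable def WonePlus (q : ℕ) (K : Type) [Field K] : Submodule ℂ (K × K → ℂ) where
  carrier := {f | (∀ l e₁ e₂ : K, l ^ (q + 1) = 1 → f (l * e₁, l * e₂) = f (e₁, e₂)) ∧
    ∀ e₁ e₂ : K, f (e₁ ^ q, e₂ ^ q) = f (e₁, e₂)}
  add_mem' := by
    rintro f g ⟨hf1, hf2⟩ ⟨hg1, hg2⟩
    exact ⟨fun l e₁ e₂ hl => by simp [hf1 l e₁ e₂ hl, hg1 l e₁ e₂ hl],
      fun e₁ e₂ => by simp [hf2 e₁ e₂, hg2 e₁ e₂]⟩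
  zero_mem' := ⟨fun l e₁ e₂ hl => by simp, fun e₁ e₂ => by simp⟩
  smul_mem' := by
    rintro c f ⟨hf1, hf2⟩
    exact ⟨fun l e₁ e₂ hl => by simp [hf1 l e₁ e₂ hl],
      fun e₁ e₂ => by simp [hf2 e₁ e₂]⟩

/-- The generalized dihedral group of a commutative group `A`: the semidirect product of `A`
with a group of order two acting by inversion. -/
@[ext]
structure GenDihedral (A : Type*) where
  /-- The component in `A`. -/
  rot : A
  /-- Whether the element lies outside of `A`. -/
  flip : Bool

namespace GenDihedral

variable {A : Type*}

/-- The underlying set of a generalized dihedral group consists of two copies of `A`. -/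
def equivProd : GenDihedral A ≃ A × Bool where
  toFun g := (g.rot, g.flip)
  invFun p := ⟨p.1, p.2⟩

instance [Fintype A] : Fintype (GenDihedral A) := Fintype.ofEquiv _ equivProd.symm

theorem card_eq [Fintype A] : Fintype.card (GenDihedral A) = 2 * Fintype.card A := by
  rw [Fintype.card_congr equivProd, Fintype.card_prod, Fintype.card_bool, mul_comm]

theorem sum_eq [Fintype A] (F : GenDihedral A → ℕ) :
    ∑ g, F g = ∑ a, F ⟨a, false⟩ + ∑ a, F ⟨a, true⟩ := by
  rw [← equivProd.symm.sum_comp, Fintype.sum_prod_type_right, Fintype.sum_bool, add_comm]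
  rfl

variable [CommGroup A]

instance : Mul (GenDihedral A) :=
  ⟨fun g h => ⟨g.rot * bif g.flip then h.rot⁻¹ else h.rot, xor g.flip h.flip⟩⟩

instance : One (GenDihedral A) := ⟨⟨1, false⟩⟩

instance : Inv (GenDihedral A) := ⟨fun g => ⟨bif g.flip then g.rot else g.rot⁻¹, g.flip⟩⟩

theorem mul_def (g h : GenDihedral A) :
    g * h = ⟨g.rot * bif g.flip then h.rot⁻¹ else h.rot, xor g.flip h.flip⟩ := rfl

theorem one_def : (1 : GenDihedral A) = ⟨1, false⟩ := rfl

theorem inv_def (g : GenDihedral A) :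
    g⁻¹ = ⟨bif g.flip then g.rot else g.rot⁻¹, g.flip⟩ := rfl

instance : Group (GenDihedral A) := Group.ofLeftAxioms
  (by rintro ⟨a, _ | _⟩ ⟨b, _ | _⟩ ⟨c, _ | _⟩ <;> simp [mul_def, mul_assoc, mul_left_comm, mul_comm])
  (by rintro ⟨a, b⟩; simp [mul_def, one_def])
  (by rintro ⟨a, _ | _⟩ <;> simp [mul_def, one_def, inv_def])

end GenDihedral

/-- The norm-one group, consisting of the units `u` with `u ^ (q + 1) = 1`. -/
abbrev normOne (q : ℕ) (K : Type) [Field K] : Subgroup Kˣ :=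
  (powMonoidHom (q + 1) : Kˣ →* Kˣ).ker

section FiniteField

variable {q : ℕ} {K : Type} [Field K]

theorem normOne_pow_add_one (a : normOne q K) : ((a : Kˣ) : K) ^ (q + 1) = 1 := by
  have h : (a : Kˣ) ^ (q + 1) = 1 := a.2
  simpa using congrArg (Units.val) h

theorem normOne_pow (a : normOne q K) : ((a : Kˣ) : K) ^ q = ((a : Kˣ) : K)⁻¹ :=
  eq_inv_of_mul_eq_one_left (by rw [← pow_succ, normOne_pow_add_one])

variable [Fintype K]

theorem two_le_of_card_eq_sq (hK : Fintype.card K = q ^ 2) : 2 ≤ q := by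
  have h := Fintype.one_lt_card (α := K)
  rw [hK] at h
  by_contra! hlt
  interval_cases q <;> simp at h

theorem natCard_units_of_card_eq_sq (hK : Fintype.card K = q ^ 2) :
    Nat.card Kˣ = (q - 1) * (q + 1) := by
  obtain ⟨m, rfl⟩ := Nat.exists_eq_add_of_le' (two_le_of_card_eq_sq hK)
  rw [Nat.card_units, Nat.card_eq_fintype_card, hK, mul_comm, ← Nat.sq_sub_sq, one_pow]

theorem natCard_normOne (hK : Fintype.card K = q ^ 2) : Nat.card (normOne q K) = q + 1 := by
  rw [IsCyclic.card_powMonoidHom_ker, natCard_units_of_card_eq_sq hK, Nat.gcd_mul_left_left]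

/-- Hilbert 90 for the quadratic extension of finite fields. -/
theorem range_powMonoidHom_eq_normOne (hK : Fintype.card K = q ^ 2) :
    (powMonoidHom (q - 1) : Kˣ →* Kˣ).range = normOne q K := by
  have hq := two_le_of_card_eq_sq hK
  refine Subgroup.eq_of_le_of_card_ge ?_ ?_
  · rintro _ ⟨u, rfl⟩
    rw [MonoidHom.mem_ker, powMonoidHom_apply, powMonoidHom_apply, ← pow_mul,
      ← natCard_units_of_card_eq_sq hK, pow_card_eq_one']
  · rw [natCard_normOne hK, IsCyclic.card_powMonoidHom_range, natCard_units_of_card_eq_sq hK,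
      Nat.gcd_mul_right_left, Nat.mul_div_cancel_left _ (by omega)]

open Classical in
theorem card_units_pow_eq (hK : Fintype.card K = q ^ 2) (a : normOne q K) :
    (Finset.univ.filter fun u : Kˣ => u ^ (q - 1) = a).card = q - 1 := by
  have h := MonoidHom.card_fiber_eq_of_mem_range (powMonoidHom (q - 1) : Kˣ →* Kˣ) (x := (a : Kˣ)) (y := 1)
    (by rw [← MonoidHom.coe_range, range_powMonoidHom_eq_normOne hK]; exact a.2) ⟨1, by simp⟩
  simp only [powMonoidHom_apply] at h
  rw [h]
  have hker := IsCyclic.card_powMonoidHom_ker Kˣ (q - 1)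
  rw [natCard_units_of_card_eq_sq hK, Nat.gcd_mul_right_left] at hker
  rw [← Fintype.card_subtype, ← Nat.card_eq_fintype_card]
  exact hker

open Classical in
theorem card_twisted_fixed (hK : Fintype.card K = q ^ 2) (a : normOne q K) :
    (Finset.univ.filter fun e : K => ((a : Kˣ) : K) * e ^ q = e).card = q := by
  have hq := two_le_of_card_eq_sq hK
  have key : (Finset.univ.filter fun e : K => ((a : Kˣ) : K) * e ^ q = e) =
      insert 0 ((Finset.univ.filter fun u : Kˣ => u ^ (q - 1) = (a⁻¹ : normOne q K)).map
        ⟨Units.val, Units.val_injective⟩) := by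
    ext e
    rcases eq_or_ne e 0 with rfl | he
    · simp [show q ≠ 0 by omega]
    · obtain ⟨u, rfl⟩ := he.isUnit
      have hpow : u ^ q = u ^ (q - 1) * u := by rw [← pow_succ, Nat.sub_add_cancel (by omega)]
      have : ((a : Kˣ) : K) * (u : K) ^ q = u ↔ u ^ (q - 1) = (a : Kˣ)⁻¹ := by
        rw [← Units.val_pow_eq_pow_val, ← Units.val_mul, Units.val_inj, hpow, ← mul_assoc,
          mul_eq_right, mul_comm, mul_eq_one_iff_eq_inv]
      simp [this]
  rw [key, Finset.card_insert_of_notMem (by simp), Finset.card_map, card_units_pow_eq hK]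
  omega

/-- The group generated by the norm-one group and the Frobenius acts on `K × K`. -/
@[reducible]
def frobeniusAction (hK : Fintype.card K = q ^ 2) :
    MulAction (GenDihedral (normOne q K)) (K × K) where
  smul g e := (((g.rot : Kˣ) : K) * bif g.flip then e.1 ^ q else e.1,
    ((g.rot : Kˣ) : K) * bif g.flip then e.2 ^ q else e.2)
  one_smul e := by
    change (((1 : Kˣ) : K) * e.1, ((1 : Kˣ) : K) * e.2) = e
    simp
  mul_smul := by
    have hfrob (x : K) : (x ^ q) ^ q = x := by
      rw [← pow_mul, ← sq, ← hK, FiniteField.pow_card]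
    rintro ⟨a, _ | _⟩ ⟨b, _ | _⟩ ⟨x, y⟩ <;>
      simp [HSMul.hSMul, GenDihedral.mul_def, mul_assoc, mul_pow, normOne_pow, hfrob]

open Classical in
theorem card_orbits_frobeniusAction (hK : Fintype.card K = q ^ 2) :
    letI := frobeniusAction hK
    Fintype.card (MulAction.orbitRel.Quotient (GenDihedral (normOne q K)) (K × K)) =
      q * (q ^ 2 + 1) / 2 := by
  let := frobeniusAction hK
  have hsmul (g : GenDihedral (normOne q K)) (e : K × K) :
      g • e = (((g.rot : Kˣ) : K) * bif g.flip then e.1 ^ q else e.1,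
        ((g.rot : Kˣ) : K) * bif g.flip then e.2 ^ q else e.2) := rfl
  have hcard : Fintype.card (normOne q K) = q + 1 := by
    rw [← Nat.card_eq_fintype_card, natCard_normOne hK]
  have burnside := MulAction.sum_card_fixedBy_eq_card_orbits_mul_card_group
    (GenDihedral (normOne q K)) (K × K)
  have hflip (a : normOne q K) :
      Fintype.card (MulAction.fixedBy (K × K) (⟨a, true⟩ : GenDihedral (normOne q K))) =
        q ^ 2 := by
    rw [Fintype.card_of_finset' (Finset.univ.filter (fun e : K => ((a : Kˣ) : K) * e ^ q = e) ×ˢ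
      Finset.univ.filter (fun e : K => ((a : Kˣ) : K) * e ^ q = e)), Finset.card_product,
      card_twisted_fixed hK, sq]
    rintro ⟨x, y⟩
    simp [MulAction.mem_fixedBy, hsmul]
  have hone : Fintype.card (MulAction.fixedBy (K × K)
      (⟨1, false⟩ : GenDihedral (normOne q K))) = q ^ 4 := by
    rw [Fintype.card_of_finset' Finset.univ, Finset.card_univ, Fintype.card_prod, hK]
    · ring
    · rintro ⟨x, y⟩
      simp [MulAction.mem_fixedBy, hsmul]
  have hrot (a : normOne q K) (ha : a ≠ 1) :
      Fintype.card (MulAction.fixedBy (K × K) (⟨a, false⟩ : GenDihedral (normOne q K))) = 1 := by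
    have ha' : ((a : Kˣ) : K) ≠ 1 := by simpa using ha
    rw [Fintype.card_of_finset' {(0, 0)}, Finset.card_singleton]
    rintro ⟨x, y⟩
    simp [MulAction.mem_fixedBy, hsmul, mul_left_eq_self₀, ha']
  rw [GenDihedral.sum_eq, GenDihedral.card_eq, hcard,
    ← Finset.add_sum_erase _ _ (Finset.mem_univ 1), hone,
    Finset.sum_congr rfl fun a ha => hrot a (Finset.ne_of_mem_erase ha)] at burnside
  simp only [hflip, Finset.sum_const, Finset.card_erase_of_mem (Finset.mem_univ _),
    Finset.card_univ, hcard, smul_eq_mul, Nat.add_sub_cancel, mul_one] at burnside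
  refine (Nat.div_eq_of_eq_mul_left two_pos ?_).symm
  refine Nat.eq_of_mul_eq_mul_right (Nat.succ_pos q) ?_
  linarith

theorem range_funLeft_orbits_eq_WonePlus (hK : Fintype.card K = q ^ 2) :
    letI := frobeniusAction hK
    LinearMap.range (LinearMap.funLeft ℂ ℂ
      (Quotient.mk (MulAction.orbitRel (GenDihedral (normOne q K)) (K × K)))) = WonePlus q K := by
  let := frobeniusAction hK
  ext f
  constructor
  · rintro ⟨F, rfl⟩
    refine ⟨fun l x y hl => congrArg F (Quotient.sound ?_),
      fun x y => congrArg F (Quotient.sound ?_)⟩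
    · have hl0 : l ≠ 0 := by rintro rfl; simp at hl
      exact ⟨⟨⟨Units.mk0 l hl0, by
        rw [MonoidHom.mem_ker]; ext; simpa using hl⟩, false⟩, rfl⟩
    · exact ⟨⟨1, true⟩, by simp [HSMul.hSMul, SMul.smul]⟩
  · rintro ⟨hrot, hfrob⟩
    refine ⟨Quotient.lift f ?_, rfl⟩
    rintro _ ⟨x, y⟩ ⟨⟨a, _ | _⟩, rfl⟩
    · exact hrot _ _ _ (normOne_pow_add_one a)
    · exact (hrot _ _ _ (normOne_pow_add_one a)).trans (hfrob x y)

end FiniteField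

/-- For `K` a field with `q²` elements (`q` an odd prime power), the space `W₁⁺` has
dimension `q(q² + 1)/2`. -/
theorem dim_WonePlus (q : ℕ) (hq : ∃ p n : ℕ, p.Prime ∧ Odd p ∧ 0 < n ∧ q = p ^ n)
    (K : Type) [Field K] [Fintype K] (hK : Fintype.card K = q ^ 2) :
    Module.finrank ℂ (WonePlus q K) = q * (q ^ 2 + 1) / 2 := by
  classical
  let := frobeniusAction hK
  rw [← range_funLeft_orbits_eq_WonePlus hK, LinearMap.finrank_range_of_inj
    (LinearMap.funLeft_injective_of_surjective _ _ _ Quotient.mk_surjective),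
    ← card_orbits_frobeniusAction hK]
  exact Module.finrank_fintype_fun_eq_card ℂ
end

section
/- The ℂ-vector space W₁⁻ := {f : K × K → ℂ | f(λe₁, λe₂) = f(e₁,e₂) for all λ ∈ μ_{q+1}, and f(e₁^q, e₂^q) = −f(e₁,e₂) for all (e₁,e₂) ∈ K × K} has dimension q(q−1)²/2 over ℂ. -/
/-- The subspace `W₁⁻` of functions on `K × K` invariant under the norm-one subgroup
`μ_{q+1}` and anti-invariant under the coordinatewise Frobenius `(e₁, e₂) ↦ (e₁^q, e₂^q)`. -/
noncomputable def WoneMinus (q : ℕ) (K : Type) [Field K] : Submodule ℂ (K × K → ℂ) where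
  carrier := {f | (∀ l e₁ e₂ : K, l ^ (q + 1) = 1 → f (l * e₁, l * e₂) = f (e₁, e₂)) ∧
    ∀ e₁ e₂ : K, f (e₁ ^ q, e₂ ^ q) = - f (e₁, e₂)}
  add_mem' := by
    rintro f g ⟨hf1, hf2⟩ ⟨hg1, hg2⟩
    exact ⟨fun l e₁ e₂ hl => by simp [hf1 l e₁ e₂ hl, hg1 l e₁ e₂ hl],
      fun e₁ e₂ => by simp [hf2 e₁ e₂, hg2 e₁ e₂]; ring⟩
  zero_mem' := ⟨fun l e₁ e₂ hl => by simp, fun e₁ e₂ => by simp⟩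
  smul_mem' := by
    rintro c f ⟨hf1, hf2⟩
    exact ⟨fun l e₁ e₂ hl => by simp [hf1 l e₁ e₂ hl],
      fun e₁ e₂ => by simp [hf2 e₁ e₂]⟩

open Polynomial in
/-- If `n * m` is the order of the unit group of a finite field, that group has a generator, and
there are `n` roots of unity of order dividing `n`. -/
theorem exists_isPrimitiveRoot_and_card_nthRootsFinset {K : Type*} [Field K] [Fintype K] {n m : ℕ}
    (h : Fintype.card K - 1 = m * n) :
    ∃ g : K, IsPrimitiveRoot g (m * n) ∧ (nthRootsFinset n (1 : K)).card = n := by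
  classical
  obtain ⟨u, hu⟩ := IsCyclic.exists_generator (α := Kˣ)
  have hord : orderOf u = m * n := by
    rw [orderOf_eq_card_of_forall_mem_zpowers hu, Nat.card_eq_fintype_card, Fintype.card_units, h]
  have hpos : 0 < m * n := hord ▸ orderOf_pos u
  have hg : IsPrimitiveRoot (u : K) (m * n) :=
    IsPrimitiveRoot.coe_units_iff.2 (hord ▸ IsPrimitiveRoot.orderOf u)
  exact ⟨u, hg, (hg.pow hpos rfl).card_nthRootsFinset⟩

/-- The trace of the pull-back operator on functions is the number of fixed points. -/
theorem trace_funLeft_eq_card_fixedPoints {R X : Type*} [CommRing R] [Fintype X] [DecidableEq X]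
    (g : X → X) :
    LinearMap.trace R (X → R) (LinearMap.funLeft R R g) =
      ((Finset.univ.filter fun x => g x = x).card : R) := by
  rw [LinearMap.trace_eq_matrix_trace R (Pi.basisFun R X), Matrix.trace]
  simp [LinearMap.funLeft_apply, Pi.single_apply]

namespace WoneMinus

open Polynomial

variable {q : ℕ} {K : Type} [Field K]

/-- Pull-back along `e ↦ l • e`, minus pull-back along `e ↦ l • σ e`. -/
noncomputable def scaleSubTwist (q : ℕ) (l : K) : (K × K → ℂ) →ₗ[ℂ] (K × K → ℂ) :=
  LinearMap.funLeft ℂ ℂ (fun x : K × K => (l * x.1, l * x.2)) -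
    LinearMap.funLeft ℂ ℂ (fun x : K × K => (l * x.1 ^ q, l * x.2 ^ q))

/-- The averaging projector onto `WoneMinus q K`. -/
noncomputable def projector (q : ℕ) (K : Type) [Field K] : (K × K → ℂ) →ₗ[ℂ] (K × K → ℂ) :=
  (2 * (q + 1) : ℂ)⁻¹ • ∑ l ∈ nthRootsFinset (q + 1) (1 : K), scaleSubTwist q l

theorem projector_apply (f : K × K → ℂ) (e₁ e₂ : K) :
    projector q K f (e₁, e₂) = (2 * (q + 1) : ℂ)⁻¹ * ∑ l ∈ nthRootsFinset (q + 1) (1 : K),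
      (f (l * e₁, l * e₂) - f (l * e₁ ^ q, l * e₂ ^ q)) := by
  simp [projector, scaleSubTwist, LinearMap.funLeft_apply]

theorem sum_nthRootsFinset_mul {n : ℕ} (hn : 0 < n) {l : K} (hl : l ^ n = 1) (F : K → ℂ) :
    ∑ m ∈ nthRootsFinset n (1 : K), F (m * l) = ∑ m ∈ nthRootsFinset n (1 : K), F m := by
  have hl0 : l ≠ 0 := by
    rintro rfl
    simp [hn.ne'] at hl
  refine Finset.sum_bij' (fun m _ => m * l) (fun m _ => m * l⁻¹) ?_ ?_ ?_ ?_ ?_ <;>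
    simp +contextual [mem_nthRootsFinset hn, mul_pow, hl, hl0]

theorem projector_isProj [Fintype K] (hK : Fintype.card K = q ^ 2)
    (hcard : (nthRootsFinset (q + 1) (1 : K)).card = q + 1) :
    LinearMap.IsProj (WoneMinus q K) (projector q K) := by
  have hσ : ∀ x : K, (x ^ q) ^ q = x := fun x => by
    rw [← pow_mul, ← sq, ← hK, FiniteField.pow_card]
  have hq : (q + 1 : ℂ) ≠ 0 := by exact_mod_cast q.succ_ne_zero
  constructor
  · intro f
    refine ⟨fun l e₁ e₂ hl => ?_, fun e₁ e₂ => ?_⟩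
    · have hl' : (l ^ q) ^ (q + 1) = 1 := by rw [← pow_mul, mul_comm, pow_mul, hl, one_pow]
      simp only [projector_apply, Finset.sum_sub_distrib, mul_pow, ← mul_assoc]
      rw [sum_nthRootsFinset_mul q.succ_pos hl fun m => f (m * e₁, m * e₂),
        sum_nthRootsFinset_mul q.succ_pos hl' fun m => f (m * e₁ ^ q, m * e₂ ^ q)]
    · simp only [projector_apply, Finset.sum_sub_distrib, hσ]
      ring
  · rintro f ⟨hf, hfσ⟩
    ext ⟨e₁, e₂⟩
    rw [projector_apply, Finset.sum_congr rfl (g := fun _ => 2 * f (e₁, e₂))]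
    · rw [Finset.sum_const, hcard, nsmul_eq_mul]
      push_cast
      field_simp
    · intro l hl
      rw [mem_nthRootsFinset q.succ_pos] at hl
      rw [hf l _ _ hl, hf l _ _ hl, hfσ]
      ring

theorem card_scale_fixed [Fintype K] [DecidableEq K] (l : K) :
    (Finset.univ.filter fun x : K × K => (l * x.1, l * x.2) = x).card =
      if l = 1 then Fintype.card K ^ 2 else 1 := by
  split_ifs with h
  · simp [h, sq]
  · rw [Finset.card_eq_one]
    refine ⟨(0, 0), ?_⟩
    ext ⟨a, b⟩
    simp only [Finset.mem_filter, Finset.mem_univ, true_and, Prod.mk.injEq, Finset.mem_singleton]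
    grind

theorem card_twist_fixed_coord [Fintype K] [DecidableEq K] (hq : 2 ≤ q)
    (hK : Fintype.card K = q ^ 2) {l : K} (hl : l ^ (q + 1) = 1) :
    (Finset.univ.filter fun x : K => l * x ^ q = x).card = q := by
  obtain ⟨r, rfl⟩ : ∃ r, q = r + 1 := ⟨q - 1, by omega⟩
  have hr : 0 < r := by omega
  have hm : Fintype.card K - 1 = (r + 1 + 1) * r := by
    rw [hK]
    exact Nat.sub_eq_of_eq_add (by ring)
  obtain ⟨g, hg, hcard⟩ := exists_isPrimitiveRoot_and_card_nthRootsFinset hm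
  have hg' : IsPrimitiveRoot (g ^ r) (r + 1 + 1) := hg.pow (by positivity) (mul_comm _ _)
  have hl0 : l ≠ 0 := by
    rintro rfl
    simp at hl
  obtain ⟨i, -, hi⟩ := hg'.eq_pow_of_pow_eq_one (ξ := l⁻¹) (by rw [inv_pow, hl, inv_one])
  set c := g ^ i with hc
  have hcr : l * c ^ r = 1 := by
    rw [hc, ← pow_mul, mul_comm i, pow_mul, hi, mul_inv_cancel₀ hl0]
  have hc0 : c ≠ 0 := by
    intro h
    simp [h, hr.ne'] at hcr
  have hset : (Finset.univ.filter fun x : K => l * x ^ (r + 1) = x) =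
      insert 0 ((nthRootsFinset r (1 : K)).image (c * ·)) := by
    ext x
    simp only [Finset.mem_filter, Finset.mem_univ, true_and, Finset.mem_insert, Finset.mem_image,
      mem_nthRootsFinset hr]
    constructor
    · intro hx
      by_cases hx0 : x = 0
      · exact Or.inl hx0
      · refine Or.inr ⟨x / c, ?_, by field_simp⟩
        have hxr : l * x ^ r = 1 := by
          apply mul_right_cancel₀ hx0
          rw [one_mul, mul_assoc, ← pow_succ, hx]
        rw [div_pow, div_eq_one_iff_eq (pow_ne_zero _ hc0)]
        exact mul_left_cancel₀ hl0 (hxr.trans hcr.symm)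
    · rintro (rfl | ⟨y, hy, rfl⟩)
      · simp
      · rw [pow_succ, mul_pow, hy]
        linear_combination (c * y) * hcr
  rw [hset, Finset.card_insert_of_notMem, Finset.card_image_of_injective _
    (mul_right_injective₀ hc0), hcard]
  simp only [Finset.mem_image, mem_nthRootsFinset hr, mul_eq_zero, hc0, false_or, not_exists,
    not_and]
  rintro y hy rfl
  simp [hr.ne'] at hy

theorem card_twist_fixed [Fintype K] [DecidableEq K] (hq : 2 ≤ q)
    (hK : Fintype.card K = q ^ 2) {l : K} (hl : l ^ (q + 1) = 1) :
    (Finset.univ.filter fun x : K × K => (l * x.1 ^ q, l * x.2 ^ q) = x).card = q ^ 2 := by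
  have h : (Finset.univ.filter fun x : K × K => (l * x.1 ^ q, l * x.2 ^ q) = x) =
      (Finset.univ.filter fun x : K => l * x ^ q = x) ×ˢ
        (Finset.univ.filter fun x : K => l * x ^ q = x) := by
    ext ⟨a, b⟩
    simp
  rw [h, Finset.card_product, card_twist_fixed_coord hq hK hl, sq]

theorem trace_projector [Fintype K] (hq : 2 ≤ q) (hK : Fintype.card K = q ^ 2)
    (hcard : (nthRootsFinset (q + 1) (1 : K)).card = q + 1) :
    LinearMap.trace ℂ (K × K → ℂ) (projector q K) = q * (q - 1) ^ 2 / 2 := by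
  classical
  have hq' : (q + 1 : ℂ) ≠ 0 := by exact_mod_cast q.succ_ne_zero
  have hterm : ∀ l ∈ nthRootsFinset (q + 1) (1 : K),
      LinearMap.trace ℂ (K × K → ℂ) (scaleSubTwist q l) =
        (if l = 1 then (q : ℂ) ^ 4 - 1 else 0) + (1 - (q : ℂ) ^ 2) := by
    intro l hl
    rw [mem_nthRootsFinset q.succ_pos] at hl
    rw [scaleSubTwist, map_sub, trace_funLeft_eq_card_fixedPoints,
      trace_funLeft_eq_card_fixedPoints, card_scale_fixed, card_twist_fixed hq hK hl, hK]
    split_ifs <;> push_cast <;> ring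
  have h1 : (1 : K) ∈ nthRootsFinset (q + 1) (1 : K) := by
    simp [mem_nthRootsFinset q.succ_pos]
  rw [projector, map_smul, map_sum, Finset.sum_congr rfl hterm, Finset.sum_add_distrib,
    Finset.sum_ite_eq' _ _, if_pos h1, Finset.sum_const, hcard, nsmul_eq_mul, smul_eq_mul]
  push_cast
  field_simp
  ring

end WoneMinus

/-- For `K` a field with `q²` elements (`q` an odd prime power), the space `W₁⁻`
(the representation `θ₁₀`) has dimension `q(q - 1)²/2`. -/
theorem dim_WoneMinus (q : ℕ) (hq : ∃ p n : ℕ, p.Prime ∧ Odd p ∧ 0 < n ∧ q = p ^ n)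
    (K : Type) [Field K] [Fintype K] (hK : Fintype.card K = q ^ 2) :
    Module.finrank ℂ (WoneMinus q K) = q * (q - 1) ^ 2 / 2 := by
  have hq2 : 2 ≤ q := by
    obtain ⟨p, n, hp, -, hn, rfl⟩ := hq
    exact hp.two_le.trans (Nat.le_self_pow hn.ne' p)
  obtain ⟨r, rfl⟩ : ∃ r, q = r + 1 := ⟨q - 1, by omega⟩
  obtain ⟨-, -, hcard⟩ := exists_isPrimitiveRoot_and_card_nthRootsFinset (K := K) (n := r + 1 + 1)
    (m := r) (by rw [hK]; exact Nat.sub_eq_of_eq_add (by ring))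
  have htrace := (WoneMinus.projector_isProj hK hcard).trace
  rw [WoneMinus.trace_projector hq2 hK hcard] at htrace
  have h : (r + 1) * r ^ 2 = 2 * Module.finrank ℂ (WoneMinus (r + 1) K) := by
    have : (((r + 1) * r ^ 2 : ℕ) : ℂ) =
        ((2 * Module.finrank ℂ (WoneMinus (r + 1) K) : ℕ) : ℂ) := by
      push_cast at htrace ⊢
      rw [← htrace]
      ring
    exact_mod_cast this
  rw [Nat.add_sub_cancel, h, Nat.mul_div_cancel_left _ two_pos]
end

section
/- For e₁, e₂ ∈ K, the following are equivalent: (i) there exists λ ∈ K with λ^{q+1} = 1 such that e₁^q = λe₁ and e₂^q = λe₂; (ii) e₁ and e₂ are linearly dependent over the subfield F_q, i.e. there exist a, b ∈ F_q, not both zero, with a·e₁ + b·e₂ = 0. -/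
/-- In a field with `q²` elements, every element `e` satisfies `e ^ q = l * e` for some
norm-one `l`. -/
lemma exists_normOne_pow_eq_mul {q : ℕ} {K : Type*} [Field K] [Fintype K]
    (hK : Fintype.card K = q ^ 2) (hq : q ≠ 0) (e : K) :
    ∃ l : K, l ^ (q + 1) = 1 ∧ e ^ q = l * e := by
  rcases eq_or_ne e 0 with rfl | he
  · exact ⟨1, one_pow _, by simp [hq]⟩
  · have hfrob : (e ^ q) ^ q = e := by
      rw [← pow_mul, ← sq, ← hK, FiniteField.pow_card]
    refine ⟨e ^ q / e, ?_, (div_mul_cancel₀ _ he).symm⟩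
    rw [div_pow, pow_succ, hfrob, pow_succ, mul_comm]
    exact div_self (mul_ne_zero (pow_ne_zero _ he) he)

/-- If `a * x + b * y = 0` with `a, b` fixed by `q`-th powers, `a ≠ 0` and `y ^ q = l * y`,
then `x ^ q = l * x`. -/
lemma pow_eq_mul_of_dependent {q : ℕ} (hq : Odd q) {K : Type*} [Field K] {a b x y l : K}
    (ha : a ^ q = a) (hb : b ^ q = b) (ha0 : a ≠ 0) (h : a * x + b * y = 0)
    (hy : y ^ q = l * y) : x ^ q = l * x := by
  have hx : a * x = -(b * y) := eq_neg_of_add_eq_zero_left h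
  have hpow : a * x ^ q = -(b * (l * y)) := by
    rw [← ha, ← mul_pow, hx, hq.neg_pow, mul_pow, hb, hy]
  apply mul_left_cancel₀ ha0
  linear_combination hpow - l * hx

/-- For `K` a field with `q²` elements (`q` an odd prime power) and `e₁, e₂ ∈ K`, the
vector `(e₁, e₂)` is "self-conjugate", i.e. `(e₁^q, e₂^q) = λ · (e₁, e₂)` for some norm-one
`λ` (`λ^(q+1) = 1`), if and only if `e₁, e₂` are linearly dependent over the subfield
`F_q = {x ∈ K | x^q = x}`. -/
theorem selfConjugate_iff_dependent (q : ℕ)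
    (hq : ∃ p n : ℕ, p.Prime ∧ Odd p ∧ 0 < n ∧ q = p ^ n)
    (K : Type) [Field K] [Fintype K] (hK : Fintype.card K = q ^ 2) (e₁ e₂ : K) :
    (∃ l : K, l ^ (q + 1) = 1 ∧ e₁ ^ q = l * e₁ ∧ e₂ ^ q = l * e₂) ↔
      (∃ a b : K, a ^ q = a ∧ b ^ q = b ∧ (a ≠ 0 ∨ b ≠ 0) ∧ a * e₁ + b * e₂ = 0) := by
  obtain ⟨p, n, -, hp, -, rfl⟩ := hq
  have hodd : Odd (p ^ n) := hp.pow
  have hne : p ^ n ≠ 0 := hodd.pos.ne'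
  constructor
  · rintro ⟨l, hl, h₁, h₂⟩
    rcases eq_or_ne e₁ 0 with rfl | he
    · exact ⟨1, 0, one_pow _, zero_pow hne, Or.inl one_ne_zero, by simp⟩
    · have hl0 : l ≠ 0 := by
        rintro rfl
        simp at hl
      refine ⟨e₂ / e₁, -1, ?_, hodd.neg_one_pow, Or.inr (neg_ne_zero.mpr one_ne_zero), ?_⟩
      · rw [div_pow, h₁, h₂, mul_div_mul_left _ _ hl0]
      · rw [div_mul_cancel₀ _ he]
        ring
  · rintro ⟨a, b, ha, hb, ha0 | hb0, h⟩
    · obtain ⟨l, hl, h₂⟩ := exists_normOne_pow_eq_mul hK hne e₂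
      exact ⟨l, hl, pow_eq_mul_of_dependent hodd ha hb ha0 h h₂, h₂⟩
    · obtain ⟨l, hl, h₁⟩ := exists_normOne_pow_eq_mul hK hne e₁
      exact ⟨l, hl, h₁, pow_eq_mul_of_dependent hodd hb ha hb0 (by rwa [add_comm]) h₁⟩
end

section
/- Exactly q² of the orbits of the action of μ_{q+1} on K × K (acting by λ·(e₁,e₂) = (λe₁, λe₂)) are mapped to themselves by the coordinatewise Frobenius (e₁,e₂) ↦ (e₁^q, e₂^q). -/
open Finset Polynomial

/-- The orbit of `v` under scaling by the `(q + 1)`-st roots of unity. -/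
def normOneOrbit {K : Type*} [Field K] (q : ℕ) (v : K × K) : Set (K × K) :=
  {w | ∃ l : K, l ^ (q + 1) = 1 ∧ w = (l * v.1, l * v.2)}

section NthRoots

variable {K : Type*} [Field K] [Fintype K] [DecidableEq K]

/-- In a finite field with `d * e` units, every `e`-th root of unity has exactly `d`
`d`-th roots. -/
theorem card_pow_eq_of_pow_eq_one {d e : ℕ} (hde : Fintype.card K = d * e + 1)
    {l : K} (hl : l ^ e = 1) : #{x : K | x ^ d = l} = d := by
  have hpos : 0 < d * e := by
    have := Fintype.one_lt_card (α := K)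
    omega
  have hd : 0 < d := Nat.pos_of_mul_pos_right hpos
  have he : 0 < e := Nat.pos_of_mul_pos_left hpos
  have hl0 : l ≠ 0 := by
    rintro rfl
    simp [he.ne'] at hl
  obtain ⟨g, hg⟩ := IsCyclic.exists_generator (α := Kˣ)
  have hord : orderOf g = d * e := by
    rw [orderOf_eq_card_of_forall_mem_zpowers hg, Nat.card_eq_fintype_card,
      Fintype.card_units, hde, Nat.add_sub_cancel]
  have hζ : IsPrimitiveRoot ((g ^ e : Kˣ) : K) d := by
    rw [IsPrimitiveRoot.coe_units_iff]
    exact (IsPrimitiveRoot.orderOf g).pow (hord ▸ hpos) (by rw [hord, mul_comm])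
  have hroot : ∃ a : K, a ^ d = l := by
    obtain ⟨k, hk⟩ := (mem_powers_iff_mem_zpowers (x := g)).2 (hg (Units.mk0 l hl0))
    have hk : g ^ k = Units.mk0 l hl0 := hk
    have hdvd : d * e ∣ k * e := by
      rw [← hord, orderOf_dvd_iff_pow_eq_one, pow_mul, hk]
      ext
      simpa using hl
    obtain ⟨j, rfl⟩ := Nat.dvd_of_mul_dvd_mul_right he hdvd
    refine ⟨((g ^ j : Kˣ) : K), ?_⟩
    rw [← Units.val_pow_eq_pow_val, ← pow_mul, mul_comm j d, hk, Units.val_mk0]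
  have hset : ({x : K | x ^ d = l} : Finset K) = (nthRoots d l).toFinset := by
    ext x
    simp [mem_nthRoots hd]
  rw [hset, Multiset.toFinset_card_of_nodup (hζ.nthRoots_nodup hl0), hζ.card_nthRoots,
    if_pos hroot]

variable {q : ℕ}

theorem card_pow_succ_eq_one (hq : 0 < q) (hK : Fintype.card K = q ^ 2) :
    #{l : K | l ^ (q + 1) = 1} = q + 1 := by
  obtain ⟨r, rfl⟩ := Nat.exists_eq_succ_of_ne_zero hq.ne'
  exact card_pow_eq_of_pow_eq_one (e := r) (by rw [hK]; simp only [Nat.succ_eq_add_one]; ring)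
    (one_pow _)

theorem card_pow_eq_mul (hq : 0 < q) (hK : Fintype.card K = q ^ 2) {l : K}
    (hl : l ^ (q + 1) = 1) : #{x : K | x ^ q = l * x} = q := by
  obtain ⟨r, rfl⟩ := Nat.exists_eq_succ_of_ne_zero hq.ne'
  have hr : r ≠ 0 := by
    rintro rfl
    have := Fintype.one_lt_card (α := K)
    simp [hK] at this
  have hl0 : l ≠ 0 := by
    rintro rfl
    simp at hl
  have hset : ({x : K | x ^ r.succ = l * x} : Finset K) =
      insert 0 ({x | x ^ r = l} : Finset K) := by
    ext x
    simp [pow_succ, or_comm]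
  rw [hset, card_insert_of_notMem (by simpa [hr] using hl0.symm),
    card_pow_eq_of_pow_eq_one (e := r + 2) (by rw [hK]; simp only [Nat.succ_eq_add_one]; ring) hl]

end NthRoots

section Orbit

variable {K : Type*} [Field K] {q : ℕ}

theorem mem_normOneOrbit {v w : K × K} :
    w ∈ normOneOrbit q v ↔ ∃ l : K, l ^ (q + 1) = 1 ∧ w = (l * v.1, l * v.2) := Iff.rfl

theorem self_mem_normOneOrbit (v : K × K) : v ∈ normOneOrbit q v :=
  ⟨1, by simp, by simp⟩

theorem normOneOrbit_subset {v w : K × K} (h : w ∈ normOneOrbit q v) :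
    normOneOrbit q w ⊆ normOneOrbit q v := by
  obtain ⟨l, hl, rfl⟩ := h
  rintro _ ⟨m, hm, rfl⟩
  exact ⟨m * l, by rw [mul_pow, hl, hm, one_mul], by simp [mul_assoc]⟩

theorem mem_normOneOrbit_symm {v w : K × K} (h : w ∈ normOneOrbit q v) :
    v ∈ normOneOrbit q w := by
  obtain ⟨l, hl, rfl⟩ := h
  have hl0 : l ≠ 0 := by
    rintro rfl
    simp at hl
  exact ⟨l⁻¹, by rw [inv_pow, hl, inv_one], by simp [hl0]⟩

theorem normOneOrbit_eq_iff {v w : K × K} :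
    normOneOrbit q w = normOneOrbit q v ↔ w ∈ normOneOrbit q v :=
  ⟨fun h => h ▸ self_mem_normOneOrbit w, fun h =>
    (normOneOrbit_subset h).antisymm (normOneOrbit_subset (mem_normOneOrbit_symm h))⟩

theorem normOneOrbit_zero : normOneOrbit q (0 : K × K) = {0} := by
  ext w
  simp only [mem_normOneOrbit, Prod.fst_zero, Prod.snd_zero, mul_zero, Set.mem_singleton_iff]
  exact ⟨fun ⟨_, _, h⟩ => h, fun h => ⟨1, one_pow _, h⟩⟩

theorem image_frobenius_normOneOrbit_eq_iff [Fintype K] (hK : Fintype.card K = q ^ 2)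
    (v : K × K) :
    (fun p : K × K => (p.1 ^ q, p.2 ^ q)) '' normOneOrbit q v = normOneOrbit q v ↔
      (v.1 ^ q, v.2 ^ q) ∈ normOneOrbit q v := by
  refine ⟨fun h => h ▸ Set.mem_image_of_mem _ (self_mem_normOneOrbit v), ?_⟩
  rintro ⟨l, hl, hv⟩
  obtain ⟨h₁, h₂⟩ := Prod.mk.inj hv
  have hl0 : l ≠ 0 := by
    rintro rfl
    simp at hl
  ext w
  constructor
  · rintro ⟨_, ⟨m, hm, rfl⟩, rfl⟩
    refine ⟨m ^ q * l, ?_, ?_⟩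
    · rw [mul_pow, hl, ← pow_mul, mul_comm q, pow_mul, hm, one_pow, one_mul]
    · simp [mul_pow, h₁, h₂, mul_assoc]
  · rintro ⟨m, hm, rfl⟩
    have hpow : ((m * l⁻¹) ^ q) ^ q = m * l⁻¹ := by
      rw [← pow_mul, ← sq, ← hK, FiniteField.pow_card]
    refine ⟨_, ⟨(m * l⁻¹) ^ q, ?_, rfl⟩, ?_⟩
    · rw [← pow_mul, mul_comm q, pow_mul, mul_pow, inv_pow, hl, hm]
      simp
    · simp only [mul_pow _ v.1, mul_pow _ v.2, hpow, h₁, h₂]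
      field_simp

theorem eq_of_smul_eq_smul {v : K × K} (hv : v ≠ 0) {l m : K}
    (h : (l * v.1, l * v.2) = (m * v.1, m * v.2)) : l = m :=
  smul_left_injective K hv h

variable [Fintype K] [DecidableEq K]

theorem card_filter_mem_normOneOrbit (hq : 0 < q) (hK : Fintype.card K = q ^ 2) {v : K × K}
    (hv : v ≠ 0) [DecidablePred (· ∈ normOneOrbit q v)] :
    #{w : K × K | w ∈ normOneOrbit q v} = q + 1 := by
  rw [← card_pow_succ_eq_one hq hK, ← card_image_of_injective _
    (fun l m h => eq_of_smul_eq_smul hv h : Function.Injective fun l : K => (l * v.1, l * v.2))]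
  congr 1
  ext w
  simp [mem_normOneOrbit, eq_comm]

theorem card_ne_zero_frobenius_mem_normOneOrbit (hq : 0 < q) (hK : Fintype.card K = q ^ 2)
    [DecidablePred fun v : K × K => v ≠ 0 ∧ (v.1 ^ q, v.2 ^ q) ∈ normOneOrbit q v] :
    #{v : K × K | v ≠ 0 ∧ (v.1 ^ q, v.2 ^ q) ∈ normOneOrbit q v} = (q + 1) * (q ^ 2 - 1) := by
  let eigen (l : K) : Finset K := {x | x ^ q = l * x}
  have hset : ({v : K × K | v ≠ 0 ∧ (v.1 ^ q, v.2 ^ q) ∈ normOneOrbit q v} : Finset (K × K)) =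
      ({l : K | l ^ (q + 1) = 1} : Finset K).biUnion
        fun l => (eigen l ×ˢ eigen l).erase 0 := by
    ext v
    simp only [mem_filter, mem_univ, true_and, mem_normOneOrbit, mem_biUnion, mem_erase,
      mem_product, eigen, Prod.mk.injEq]
    grind
  rw [hset, card_biUnion]
  · rw [sum_congr rfl (g := fun _ => q ^ 2 - 1), sum_const, card_pow_succ_eq_one hq hK,
      smul_eq_mul]
    intro l hl
    rw [card_erase_of_mem (by simp [eigen, hq.ne']), card_product,
      card_pow_eq_mul hq hK (mem_filter.1 hl).2, sq]
  · intro l _ m _ hlm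
    refine disjoint_left.2 fun v hvl hvm => hlm ?_
    simp only [eigen, mem_erase, mem_product, mem_filter, mem_univ, true_and] at hvl hvm
    exact eq_of_smul_eq_smul hvl.1
      (Prod.ext (hvl.2.1.symm.trans hvm.2.1) (hvl.2.2.symm.trans hvm.2.2))

end Orbit

/-- For `K` a field with `q²` elements (`q` an odd prime power), exactly `q²` of the orbits
of the action of the norm-one subgroup `μ_{q+1} = {λ ∈ K | λ^(q+1) = 1}` on `K × K`
(acting by `λ · (e₁, e₂) = (λe₁, λe₂)`) are mapped to themselves by the coordinatewise
Frobenius `(e₁, e₂) ↦ (e₁^q, e₂^q)`. -/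
theorem card_selfConjugate_orbits (q : ℕ)
    (hq : ∃ p n : ℕ, p.Prime ∧ Odd p ∧ 0 < n ∧ q = p ^ n)
    (K : Type) [Field K] [Fintype K] (hK : Fintype.card K = q ^ 2) :
    Nat.card {O : Set (K × K) //
      (∃ v : K × K, O = {w | ∃ l : K, l ^ (q + 1) = 1 ∧ w = (l * v.1, l * v.2)}) ∧
      (fun p : K × K => (p.1 ^ q, p.2 ^ q)) '' O = O} = q ^ 2 := by
  classical
  have hq0 : 0 < q := by
    obtain ⟨p, n, hp, -, -, rfl⟩ := hq
    exact pow_pos hp.pos n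
  let T : Finset (K × K) := {v | v ≠ 0 ∧ (v.1 ^ q, v.2 ^ q) ∈ normOneOrbit q v}
  have hT : #T = (q + 1) * (q ^ 2 - 1) := card_ne_zero_frobenius_mem_normOneOrbit hq0 hK
  have himage : #(T.image (normOneOrbit q)) = q ^ 2 - 1 := by
    have hfib : ∀ O ∈ T.image (normOneOrbit q), #{w ∈ T | normOneOrbit q w = O} = q + 1 := by
      intro O hO
      obtain ⟨v, hv, rfl⟩ := mem_image.1 hO
      obtain ⟨hv0, hv⟩ := (mem_filter.1 hv).2
      rw [← card_filter_mem_normOneOrbit hq0 hK hv0]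
      congr 1
      ext w
      simp only [T, mem_filter, mem_univ, true_and, normOneOrbit_eq_iff, and_iff_right_iff_imp]
      intro hw
      refine ⟨?_, ?_⟩
      · rintro rfl
        have := mem_normOneOrbit_symm hw
        rw [normOneOrbit_zero] at this
        exact hv0 this
      · rw [← image_frobenius_normOneOrbit_eq_iff hK] at hv ⊢
        rwa [normOneOrbit_eq_iff.2 hw]
    have := card_eq_sum_card_image (normOneOrbit q) T
    rw [sum_congr rfl hfib, sum_const, smul_eq_mul, hT, mul_comm] at this
    exact (Nat.eq_of_mul_eq_mul_right q.succ_pos this).symm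
  have hset : {O : Set (K × K) | (∃ v : K × K, O = normOneOrbit q v) ∧
      (fun p : K × K => (p.1 ^ q, p.2 ^ q)) '' O = O} =
      ↑(insert {0} (T.image (normOneOrbit q))) := by
    ext O
    simp only [Set.mem_ofPred_eq, coe_insert, coe_image, Set.mem_insert_iff, Set.mem_image,
      mem_coe, T, mem_filter, mem_univ, true_and]
    constructor
    · rintro ⟨⟨v, rfl⟩, hv⟩
      rw [image_frobenius_normOneOrbit_eq_iff hK] at hv
      by_cases hv0 : v = 0
      · left
        rw [hv0, normOneOrbit_zero]
      · exact Or.inr ⟨v, ⟨hv0, hv⟩, rfl⟩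
    · rintro (rfl | ⟨v, ⟨-, hv⟩, rfl⟩)
      · exact ⟨⟨0, normOneOrbit_zero.symm⟩, by simp [hq0.ne']⟩
      · exact ⟨⟨v, rfl⟩, (image_frobenius_normOneOrbit_eq_iff hK v).2 hv⟩
  have hzero : ({0} : Set (K × K)) ∉ T.image (normOneOrbit q) := by
    intro h
    obtain ⟨v, hv, h⟩ := mem_image.1 h
    have hmem : v ∈ normOneOrbit q v := self_mem_normOneOrbit v
    rw [h] at hmem
    exact (mem_filter.1 hv).2.1 hmem
  change Set.ncard {O : Set (K × K) | (∃ v : K × K, O = normOneOrbit q v) ∧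
      (fun p : K × K => (p.1 ^ q, p.2 ^ q)) '' O = O} = q ^ 2
  rw [hset, Set.ncard_coe_finset, card_insert_of_notMem hzero, himage]
  exact Nat.sub_add_cancel (Nat.pow_pos hq0)
end

section
/- The action of the symplectic group Sp(4, F_q) = {g ∈ GL₄(F_q) : gᵀ J g = J} on K⁴, given by matrix-vector multiplication after mapping the entries of g into K through the inclusion F_q ⊆ K, has exactly 2q+2 orbits. -/
open Matrix

/-- The Gram matrix of the standard symplectic form on `F⁴`: entry `1` at positions
`(1,4), (2,3)` and `-1` at positions `(3,2), (4,1)` (1-indexed), `0` elsewhere. -/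
def Jmat (F : Type) [Field F] : Matrix (Fin 4) (Fin 4) F :=
  !![0, 0, 0, 1; 0, 0, 1, 0; 0, -1, 0, 0; -1, 0, 0, 0]

namespace Sp4

variable {F : Type} [Field F]

/-- The standard symplectic form with Gram matrix `Jmat F`, in coordinates. -/
def form (x y : Fin 4 → F) : F := x 0 * y 3 + x 1 * y 2 - x 2 * y 1 - x 3 * y 0

/-- The relation of being in the same `Sp(4, F)`-orbit of pairs of vectors. -/
def PairRel (x y : (Fin 4 → F) × (Fin 4 → F)) : Prop :=
  ∃ g : Matrix (Fin 4) (Fin 4) F, IsUnit g ∧ gᵀ * Jmat F * g = Jmat F ∧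
    g *ᵥ x.1 = y.1 ∧ g *ᵥ x.2 = y.2

lemma Jmat_mul_Jmat : Jmat F * Jmat F = -1 := by
  ext i j
  fin_cases i <;> fin_cases j <;> simp [Jmat, Matrix.mul_apply, Fin.sum_univ_four]

lemma isUnit_of_preserves {g : Matrix (Fin 4) (Fin 4) F} (h : gᵀ * Jmat F * g = Jmat F) :
    IsUnit g := by
  refine IsUnit.of_mul_eq_one_right (-(Jmat F * gᵀ * Jmat F)) ?_
  rw [neg_mul, mul_assoc, mul_assoc, ← mul_assoc gᵀ, h, Jmat_mul_Jmat, neg_neg]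

lemma form_eq_dotProduct (x y : Fin 4 → F) : form x y = x ⬝ᵥ (Jmat F *ᵥ y) := by
  simp [form, Jmat, dotProduct, Matrix.mulVec, Fin.sum_univ_four]
  ring

lemma form_mulVec {g : Matrix (Fin 4) (Fin 4) F} (h : gᵀ * Jmat F * g = Jmat F)
    (x y : Fin 4 → F) : form (g *ᵥ x) (g *ᵥ y) = form x y := by
  have hy : Jmat F *ᵥ y = gᵀ *ᵥ (Jmat F *ᵥ (g *ᵥ y)) := by
    rw [Matrix.mulVec_mulVec, Matrix.mulVec_mulVec, h]
  rw [form_eq_dotProduct, form_eq_dotProduct, hy, Matrix.dotProduct_mulVec x gᵀ,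
    Matrix.vecMul_transpose]

lemma PairRel.refl (x : (Fin 4 → F) × (Fin 4 → F)) : PairRel x x :=
  ⟨1, isUnit_one, by simp, by simp, by simp⟩

lemma PairRel.symm {x y : (Fin 4 → F) × (Fin 4 → F)} (h : PairRel x y) : PairRel y x := by
  obtain ⟨g, hu, hg, h1, h2⟩ := h
  have hdet := (Matrix.isUnit_iff_isUnit_det g).1 hu
  have hinv : g * g⁻¹ = 1 := Matrix.mul_nonsing_inv g hdet
  have hinv' : g⁻¹ * g = 1 := Matrix.nonsing_inv_mul g hdet
  have key : g⁻¹ᵀ * Jmat F * g⁻¹ = Jmat F := by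
    have ht : g⁻¹ᵀ * gᵀ = 1 := by rw [← Matrix.transpose_mul, hinv, Matrix.transpose_one]
    calc g⁻¹ᵀ * Jmat F * g⁻¹ = g⁻¹ᵀ * (gᵀ * Jmat F * g) * g⁻¹ := by rw [hg]
      _ = (g⁻¹ᵀ * gᵀ) * Jmat F * (g * g⁻¹) := by simp only [mul_assoc]
      _ = Jmat F := by rw [ht, hinv, one_mul, mul_one]
  refine ⟨g⁻¹, isUnit_of_preserves key, key, ?_, ?_⟩
  · rw [← h1, Matrix.mulVec_mulVec, hinv', Matrix.one_mulVec]
  · rw [← h2, Matrix.mulVec_mulVec, hinv', Matrix.one_mulVec]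

lemma PairRel.trans {x y z : (Fin 4 → F) × (Fin 4 → F)} (h : PairRel x y) (h' : PairRel y z) :
    PairRel x z := by
  obtain ⟨g, -, hg, h1, h2⟩ := h
  obtain ⟨k, -, hk, h3, h4⟩ := h'
  have key : (k * g)ᵀ * Jmat F * (k * g) = Jmat F := by
    calc (k * g)ᵀ * Jmat F * (k * g) = gᵀ * (kᵀ * Jmat F * k) * g := by
          rw [Matrix.transpose_mul]; simp only [mul_assoc]
      _ = Jmat F := by rw [hk, hg]
  refine ⟨k * g, isUnit_of_preserves key, key, ?_, ?_⟩
  · rw [← Matrix.mulVec_mulVec, h1, h3]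
  · rw [← Matrix.mulVec_mulVec, h2, h4]

lemma exists_transvection (u : Fin 4 → F) (l : F) :
    ∃ g : Matrix (Fin 4) (Fin 4) F, gᵀ * Jmat F * g = Jmat F ∧
      ∀ x, g *ᵥ x = x + (l * form u x) • u := by
  refine ⟨1 + l • vecMulVec u ![-u 3, -u 2, u 1, u 0], ?_, fun x => ?_⟩
  · ext i j
    fin_cases i <;> fin_cases j <;>
      simp [Jmat, Matrix.mul_apply, Fin.sum_univ_four, Matrix.one_apply] <;> ring
  · ext i
    fin_cases i <;>
      simp [form, Matrix.mulVec, dotProduct, Fin.sum_univ_four, Matrix.one_apply] <;> ring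

/-- A single transvection moves `x` to `y` when these are not orthogonal, and fixes
every vector orthogonal to `y - x`. -/
lemma exists_map_of_form_ne_zero {x y : Fin 4 → F} (h : form y x ≠ 0) :
    ∃ g : Matrix (Fin 4) (Fin 4) F, gᵀ * Jmat F * g = Jmat F ∧ g *ᵥ x = y ∧
      ∀ s, form s x = form s y → g *ᵥ s = s := by
  obtain ⟨g, hg, hx⟩ := exists_transvection (y - x) (form y x)⁻¹
  refine ⟨g, hg, ?_, fun s hs => ?_⟩
  · have : form (y - x) x = form y x := by simp [form]; ring
    rw [hx, this, inv_mul_cancel₀ h, one_smul, add_sub_cancel]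
  · have : form (y - x) s = 0 := by
      simp only [form, Pi.sub_apply] at hs ⊢
      linear_combination hs
    rw [hx, this, mul_zero, zero_smul, add_zero]

lemma exists_map_first {a : Fin 4 → F} (ha : a ≠ 0) :
    ∃ g : Matrix (Fin 4) (Fin 4) F, gᵀ * Jmat F * g = Jmat F ∧ g *ᵥ a = ![1, 0, 0, 0] := by
  obtain ⟨z, hz, hz'⟩ : ∃ z : Fin 4 → F, form z a ≠ 0 ∧ form ![1, 0, 0, 0] z ≠ 0 := by
    by_cases h0 : a 0 = 0
    · by_cases h1 : a 1 = 0
      · by_cases h2 : a 2 = 0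
        · have h3 : a 3 ≠ 0 := fun h3 => ha (by ext i; fin_cases i <;> simp [h0, h1, h2, h3])
          exact ⟨![1, 0, 0, 1], by simp [form, h0, h3], by simp [form]⟩
        · by_cases h3 : a 3 = 0
          · exact ⟨![0, 1, 0, 1], by simp [form, h0, h2], by simp [form]⟩
          · exact ⟨![1, 0, 0, 1], by simp [form, h0, h3], by simp [form]⟩
      · exact ⟨![0, 0, 1, 1], by simp [form, h0, h1], by simp [form]⟩
    · exact ⟨![0, 0, 0, 1], by simp [form, h0], by simp [form]⟩
  obtain ⟨g, hg, h1, -⟩ := exists_map_of_form_ne_zero hz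
  obtain ⟨k, hk, h2, -⟩ := exists_map_of_form_ne_zero hz'
  refine ⟨k * g, ?_, by rw [← Matrix.mulVec_mulVec, h1, h2]⟩
  rw [Matrix.transpose_mul]
  calc gᵀ * kᵀ * Jmat F * (k * g) = gᵀ * (kᵀ * Jmat F * k) * g := by simp only [mul_assoc]
    _ = Jmat F := by rw [hk, hg]

lemma pairRel_of_form_ne_zero {a x y : Fin 4 → F} (h : form y x ≠ 0)
    (ha : form a x = form a y) : PairRel (a, x) (a, y) := by
  obtain ⟨g, hg, h1, h2⟩ := exists_map_of_form_ne_zero h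
  exact ⟨g, isUnit_of_preserves hg, hg, h2 a ha, h1⟩

lemma pairRel_normal_form [Fintype F] (hF : 3 ≤ Fintype.card F) (b : Fin 4 → F)
    (hb : ¬(b 1 = 0 ∧ b 2 = 0 ∧ b 3 = 0)) :
    PairRel (![1, 0, 0, 0], b) (![1, 0, 0, 0], ![0, 1, 0, b 3]) := by
  obtain ⟨z, h1, h2, h3⟩ : ∃ z : Fin 4 → F, form z b ≠ 0 ∧ form ![0, 1, 0, b 3] z ≠ 0 ∧
      z 3 = b 3 := by
    by_cases hc : b 3 = 0
    · by_cases hb1 : b 1 = 0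
      · have hb2 : b 2 ≠ 0 := fun h => hb ⟨hb1, h, hc⟩
        exact ⟨![0, 1, 1, 0], by simp [form, hb1, hb2, hc], by simp [form], by simp [hc]⟩
      · exact ⟨![0, 0, 1, 0], by simp [form, hb1, hc], by simp [form], by simp [hc]⟩
    · classical
      obtain ⟨t, ht⟩ : ∃ t : F, t ∉ ({0, b 0} : Finset F) := by
        by_contra! h
        have := Finset.card_le_card (fun x _ => h x : (Finset.univ : Finset F) ⊆ {0, b 0})
        have h' := Finset.card_le_two (a := (0 : F)) (b := b 0)
        rw [Finset.card_univ] at this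
        omega
      simp only [Finset.mem_insert, Finset.mem_singleton, not_or] at ht
      refine ⟨![t, 0, 0, b 3], ?_, by simp [form, ht.1, hc], by simp⟩
      have : form ![t, 0, 0, b 3] b = (t - b 0) * b 3 := by simp [form]; ring
      rw [this]
      exact mul_ne_zero (sub_ne_zero.2 ht.2) hc
  exact (pairRel_of_form_ne_zero h1 (by simp [form, h3])).trans
    (pairRel_of_form_ne_zero h2 (by simp [form, h3]))

/-- Representatives of the orbits of `Sp(4, F)` on pairs of vectors. -/
def rep : Option (Option F) ⊕ F → (Fin 4 → F) × (Fin 4 → F)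
  | .inl none => (0, 0)
  | .inl (some none) => (0, ![1, 0, 0, 0])
  | .inl (some (some t)) => (![1, 0, 0, 0], ![t, 0, 0, 0])
  | .inr c => (![1, 0, 0, 0], ![0, 1, 0, c])

lemma exists_pairRel_rep [Fintype F] (hF : 3 ≤ Fintype.card F)
    (x : (Fin 4 → F) × (Fin 4 → F)) : ∃ r, PairRel x (rep r) := by
  obtain ⟨a, b⟩ := x
  by_cases ha : a = 0
  · by_cases hb : b = 0
    · exact ⟨.inl none, by rw [ha, hb]; exact PairRel.refl _⟩
    · obtain ⟨g, hg, h⟩ := exists_map_first hb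
      exact ⟨.inl (some none), g, isUnit_of_preserves hg, hg, by simp [ha, rep], h⟩
  · obtain ⟨g, hg, h⟩ := exists_map_first ha
    have hrel : PairRel (a, b) (![1, 0, 0, 0], g *ᵥ b) := ⟨g, isUnit_of_preserves hg, hg, h, rfl⟩
    generalize g *ᵥ b = b' at hrel
    by_cases hb : b' 1 = 0 ∧ b' 2 = 0 ∧ b' 3 = 0
    · refine ⟨.inl (some (some (b' 0))), ?_⟩
      have : b' = ![b' 0, 0, 0, 0] := by
        ext i; fin_cases i <;> simp [hb.1, hb.2.1, hb.2.2]
      rw [this] at hrel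
      exact hrel
    · exact ⟨.inr (b' 3), hrel.trans (pairRel_normal_form hF b' hb)⟩

lemma PairRel.fst_eq_zero {x y : (Fin 4 → F) × (Fin 4 → F)} (h : PairRel x y) (hx : x.1 = 0) :
    y.1 = 0 := by
  obtain ⟨g, -, -, h1, -⟩ := h
  rw [← h1, hx, Matrix.mulVec_zero]

lemma PairRel.snd_eq_zero {x y : (Fin 4 → F) × (Fin 4 → F)} (h : PairRel x y) (hx : x.2 = 0) :
    y.2 = 0 := by
  obtain ⟨g, -, -, -, h2⟩ := h
  rw [← h2, hx, Matrix.mulVec_zero]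

lemma PairRel.snd_eq_smul {x y : (Fin 4 → F) × (Fin 4 → F)} (h : PairRel x y) {t : F}
    (hx : x.2 = t • x.1) : y.2 = t • y.1 := by
  obtain ⟨g, -, -, h1, h2⟩ := h
  rw [← h1, ← h2, hx, Matrix.mulVec_smul]

lemma PairRel.form_eq {x y : (Fin 4 → F) × (Fin 4 → F)} (h : PairRel x y) :
    form x.1 x.2 = form y.1 y.2 := by
  obtain ⟨g, -, hg, h1, h2⟩ := h
  rw [← h1, ← h2, form_mulVec hg]

lemma first_ne_zero : (![1, 0, 0, 0] : Fin 4 → F) ≠ 0 := fun h => by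
  simpa using congrFun h 0

lemma rep_eq_smul (t : F) :
    (rep (.inl (some (some t)))).2 = t • (rep (.inl (some (some t)))).1 := by
  simp [rep]

lemma eq_of_pairRel_rep {r s : Option (Option F) ⊕ F} (h : PairRel (rep r) (rep s)) : r = s := by
  match r, s with
  | .inl none, .inl none => rfl
  | .inl none, .inl (some none) => exact absurd (h.snd_eq_zero rfl) first_ne_zero
  | .inl none, .inl (some (some t)) => exact absurd (h.fst_eq_zero rfl) first_ne_zero
  | .inl none, .inr c => exact absurd (h.fst_eq_zero rfl) first_ne_zero
  | .inl (some none), .inl none => exact absurd (h.symm.snd_eq_zero rfl) first_ne_zero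
  | .inl (some none), .inl (some none) => rfl
  | .inl (some none), .inl (some (some t)) => exact absurd (h.fst_eq_zero rfl) first_ne_zero
  | .inl (some none), .inr c => exact absurd (h.fst_eq_zero rfl) first_ne_zero
  | .inl (some (some t)), .inl none => exact absurd (h.symm.fst_eq_zero rfl) first_ne_zero
  | .inl (some (some t)), .inl (some none) => exact absurd (h.symm.fst_eq_zero rfl) first_ne_zero
  | .inl (some (some t)), .inl (some (some t')) =>
    have := congrFun (h.snd_eq_smul (rep_eq_smul t)) 0
    simp only [rep, Matrix.cons_val_zero, Pi.smul_apply, smul_eq_mul, mul_one] at this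
    rw [this]
  | .inl (some (some t)), .inr c =>
    have := congrFun (h.snd_eq_smul (rep_eq_smul t)) 1
    simp [rep] at this
  | .inr c, .inl none => exact absurd (h.symm.fst_eq_zero rfl) first_ne_zero
  | .inr c, .inl (some none) => exact absurd (h.symm.fst_eq_zero rfl) first_ne_zero
  | .inr c, .inl (some (some t)) =>
    have := congrFun (h.symm.snd_eq_smul (rep_eq_smul t)) 1
    simp [rep] at this
  | .inr c, .inr c' =>
    have := h.form_eq
    simp only [rep, form] at this
    simp at this
    rw [this]

variable {K : Type} [Field K] [Algebra F K]

/-- Coordinates of a vector of `K⁴` with respect to an `F`-basis of `K` of size two. -/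
noncomputable def coords (B : Module.Basis (Fin 2) F K) :
    (Fin 4 → K) ≃ (Fin 4 → F) × (Fin 4 → F) where
  toFun v := (fun i => B.repr (v i) 0, fun i => B.repr (v i) 1)
  invFun x i := x.1 i • B 0 + x.2 i • B 1
  left_inv v := by
    ext i
    exact (Fin.sum_univ_two fun j => B.repr (v i) j • B j).symm.trans (B.sum_repr (v i))
  right_inv x := by
    ext i <;> simp

lemma coords_mulVec (B : Module.Basis (Fin 2) F K) (g : Matrix (Fin 4) (Fin 4) F)
    (v : Fin 4 → K) : coords B (g.map (algebraMap F K) *ᵥ v) =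
      (g *ᵥ (coords B v).1, g *ᵥ (coords B v).2) := by
  ext i <;>
    simp [coords, Matrix.mulVec, dotProduct, ← Algebra.smul_def]

lemma exists_mulVec_iff_pairRel (B : Module.Basis (Fin 2) F K) (v w : Fin 4 → K) :
    (∃ g : Matrix (Fin 4) (Fin 4) F, IsUnit g ∧ g.transpose * Jmat F * g = Jmat F ∧
      w = (g.map (algebraMap F K)).mulVec v) ↔ PairRel (coords B v) (coords B w) := by
  refine exists_congr fun g => and_congr_right fun _ => and_congr_right fun _ => ?_
  rw [← (coords B).apply_eq_iff_eq, coords_mulVec, Prod.ext_iff]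
  exact and_congr eq_comm eq_comm

end Sp4

/-- Let `q` be an odd prime power, `F` a field with `q` elements and `K ⊇ F` a field with
`q²` elements.  The action of `Sp(4, F) = {g ∈ GL₄(F) | gᵀ J g = J}` on `K⁴`, by
matrix-vector multiplication after mapping the entries of `g` into `K`, has exactly
`2q + 2` orbits. -/
theorem card_orbits_Sp4_on_K4 (q : ℕ)
    (hq : ∃ p n : ℕ, p.Prime ∧ Odd p ∧ 0 < n ∧ q = p ^ n)
    (F K : Type) [Field F] [Field K] [Algebra F K] [Fintype F] [Fintype K]
    (hF : Fintype.card F = q) (hK : Fintype.card K = q ^ 2) :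
    Nat.card {O : Set (Fin 4 → K) // ∃ v : Fin 4 → K,
      O = {w | ∃ g : Matrix (Fin 4) (Fin 4) F, IsUnit g ∧
        g.transpose * Jmat F * g = Jmat F ∧
        w = (g.map (algebraMap F K)).mulVec v}} = 2 * q + 2 := by
  have hq3 : 3 ≤ Fintype.card F := by
    obtain ⟨p, n, hp, hodd, hn, rfl⟩ := hq
    have h3 : 3 ≤ p := by
      have := hp.two_le
      obtain ⟨k, rfl⟩ := hodd
      omega
    rw [hF]
    exact h3.trans (Nat.le_self_pow hn.ne' p)
  have hrank : Module.finrank F K = 2 := by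
    have h := Module.card_eq_pow_finrank (K := F) (V := K)
    rw [hF, hK] at h
    exact (Nat.pow_right_injective (by omega : 2 ≤ q) h).symm
  let B : Module.Basis (Fin 2) F K := Module.finBasisOfFinrankEq F K hrank
  have horbit (v : Fin 4 → K) : {w | ∃ g : Matrix (Fin 4) (Fin 4) F, IsUnit g ∧
      g.transpose * Jmat F * g = Jmat F ∧ w = (g.map (algebraMap F K)).mulVec v} =
      {w | Sp4.PairRel (Sp4.coords B v) (Sp4.coords B w)} :=
    Set.ext fun w => Sp4.exists_mulVec_iff_pairRel B v w
  simp_rw [horbit]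
  have hcard : Nat.card (Option (Option F) ⊕ F) = 2 * q + 2 := by
    simp only [Nat.card_eq_fintype_card, Fintype.card_sum, Fintype.card_option, hF]
    ring
  rw [← hcard]
  refine (Nat.card_eq_of_bijective (fun r => ⟨_, (Sp4.coords B).symm (Sp4.rep r), rfl⟩)
    ⟨fun r s hrs => ?_, ?_⟩).symm
  · have h := (Set.ext_iff.1 (Subtype.ext_iff.1 hrs) ((Sp4.coords B).symm (Sp4.rep s))).2
      (Sp4.PairRel.refl _)
    simp only [Set.mem_ofPred_eq, Equiv.apply_symm_apply] at h
    exact Sp4.eq_of_pairRel_rep h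
  · rintro ⟨_, v, rfl⟩
    obtain ⟨r, hr⟩ := Sp4.exists_pairRel_rep hq3 (Sp4.coords B v)
    refine ⟨r, Subtype.ext (Set.ext fun w => ?_)⟩
    simp only [Set.mem_ofPred_eq, Equiv.apply_symm_apply]
    exact ⟨hr.trans, hr.symm.trans⟩
end

section
/- Let k be a field, V a finite-dimensional k-vector space, B a nondegenerate alternating bilinear form on V, and L ⊆ V a Lagrangian subspace, i.e. L equals its B-orthogonal complement {v ∈ V : B(v, x) = 0 for all x ∈ L}. Let U be the set of linear automorphisms g of V such that B(gv, gw) = B(v, w) for all v, w ∈ V, g x = x for all x ∈ L, and gv − v ∈ L for all v ∈ V. Then U is a subgroup of the group of linear automorphisms of V, and the map Φ sending g ∈ U to the bilinear form on V/L defined by Φ(g)(v + L, w + L) = B(v, gw − w) is well defined and is a group isomorphism from U onto the additive group of symmetric bilinear forms on V/L. -/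
/-- The additive group (submodule) of symmetric bilinear forms on a vector space. -/
def symmBilinForms (k W : Type) [Field k] [AddCommGroup W] [Module k W] :
    Submodule k (W →ₗ[k] W →ₗ[k] k) where
  carrier := {Q | ∀ v w : W, Q v w = Q w v}
  add_mem' := by intro a b ha hb v w; simp [ha v w, hb v w]
  zero_mem' := by intro v w; simp
  smul_mem' := by intro c a ha v w; simp [ha v w]

namespace LinearMap

section Quotient

variable {R M N : Type*} [CommRing R] [AddCommGroup M] [Module R M] [AddCommGroup N] [Module R N]

/-- The bilinear map on `M ⧸ L` induced by a bilinear map on `M` that vanishes as soon as one of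
its arguments lies in `L`. -/
def quotientLift₂ (L : Submodule R M) (F : M →ₗ[R] M →ₗ[R] N)
    (hleft : ∀ x ∈ L, ∀ w, F x w = 0) (hright : ∀ v, ∀ x ∈ L, F v x = 0) :
    M ⧸ L →ₗ[R] M ⧸ L →ₗ[R] N :=
  (L.liftQ (L.liftQ F fun x hx => LinearMap.ext (hleft x hx)).flip fun x hx => by
    refine LinearMap.ext fun v => ?_
    obtain ⟨v, rfl⟩ := L.mkQ_surjective v
    exact hright v x hx).flip

@[simp]
theorem quotientLift₂_mk (L : Submodule R M) (F : M →ₗ[R] M →ₗ[R] N)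
    (hleft : ∀ x ∈ L, ∀ w, F x w = 0) (hright : ∀ v, ∀ x ∈ L, F v x = 0) (v w : M) :
    quotientLift₂ L F hleft hright (Submodule.Quotient.mk v) (Submodule.Quotient.mk w) = F v w :=
  rfl

end Quotient

/-- The automorphisms of `V` that preserve `B`, fix `L` pointwise and act trivially on `V ⧸ L`. -/
def unipotentRadical {R V : Type*} [CommRing R] [AddCommGroup V] [Module R V]
    (B : V →ₗ[R] V →ₗ[R] R) (L : Submodule R V) : Subgroup (V ≃ₗ[R] V) where
  carrier := {g | (∀ v w, B (g v) (g w) = B v w) ∧ (∀ x ∈ L, g x = x) ∧ ∀ v, g v - v ∈ L}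
  one_mem' := by simp
  mul_mem' := by
    rintro g h ⟨hgB, hgL, hgV⟩ ⟨hhB, hhL, hhV⟩
    refine ⟨fun v w => ?_, fun x hx => ?_, fun v => ?_⟩
    · rw [LinearEquiv.mul_apply, LinearEquiv.mul_apply, hgB, hhB]
    · rw [LinearEquiv.mul_apply, hhL x hx, hgL x hx]
    · rw [LinearEquiv.mul_apply, ← sub_add_sub_cancel _ (h v)]
      exact add_mem (hgV _) (hhV v)
  inv_mem' := by
    rintro g ⟨hgB, hgL, hgV⟩
    have hinv (v : V) : g (g⁻¹ v) = v := g.apply_symm_apply v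
    refine ⟨fun v w => ?_, fun x hx => g.injective ?_, fun v => ?_⟩
    · rw [← hgB, hinv, hinv]
    · rw [hinv, hgL x hx]
    · have := hgV (g⁻¹ v)
      rw [hinv] at this
      rw [← neg_sub]
      exact neg_mem this

theorem mul_apply_sub_of_mem_unipotentRadical {R V : Type*} [CommRing R] [AddCommGroup V]
    [Module R V] {B : V →ₗ[R] V →ₗ[R] R} {L : Submodule R V} {g h : V ≃ₗ[R] V}
    (hg : g ∈ unipotentRadical B L) (hh : h ∈ unipotentRadical B L) (w : V) :
    (g * h) w - w = (g w - w) + (h w - w) := by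
  have := hg.2.1 _ (hh.2.2 w)
  rw [map_sub, sub_eq_iff_eq_add] at this
  rw [LinearEquiv.mul_apply, this]
  abel

theorem IsAlt.apply_sub_comm_of_mem_unipotentRadical {R V : Type*} [CommRing R] [AddCommGroup V]
    [Module R V] {B : V →ₗ[R] V →ₗ[R] R} (hB : B.IsAlt) {L : Submodule R V}
    (hL : ∀ x ∈ L, ∀ y ∈ L, B x y = 0) {g : V ≃ₗ[R] V} (hg : g ∈ unipotentRadical B L) (v w : V) :
    B v (g w - w) = B w (g v - v) := by
  have hiso := hg.1 v w
  have hzero := hL _ (hg.2.2 v) _ (hg.2.2 w)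
  have hvw := hB.neg v w
  have hgvw := hB.neg (g v) w
  simp only [map_sub, sub_apply] at hzero ⊢
  linear_combination hiso - hzero - hvw + hgvw

/-- The symmetric form `(v + L, w + L) ↦ B v (g w - w)` on `V ⧸ L` attached to an element `g` of
the unipotent radical. -/
def unipotentRadicalToSymm {k V : Type} [Field k] [AddCommGroup V] [Module k V]
    {B : V →ₗ[k] V →ₗ[k] k} (hB : B.IsAlt) {L : Submodule k V}
    (hL : ∀ x ∈ L, ∀ y ∈ L, B x y = 0) :
    unipotentRadical B L →* Multiplicative (symmBilinForms k (V ⧸ L)) where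
  toFun g := Multiplicative.ofAdd
    ⟨quotientLift₂ L (B.compl₂ (g.1.toLinearMap - LinearMap.id))
      (fun x hx w => hL x hx _ (g.2.2.2 w))
      (fun v x hx => by simp [g.2.2.1 x hx]), by
      intro v w
      obtain ⟨v, rfl⟩ := Submodule.Quotient.mk_surjective L v
      obtain ⟨w, rfl⟩ := Submodule.Quotient.mk_surjective L w
      exact hB.apply_sub_comm_of_mem_unipotentRadical hL g.2 v w⟩
  map_one' := by
    refine Subtype.ext (LinearMap.ext fun v => LinearMap.ext fun w => ?_)
    obtain ⟨v, rfl⟩ := Submodule.Quotient.mk_surjective L v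
    obtain ⟨w, rfl⟩ := Submodule.Quotient.mk_surjective L w
    change B v (w - w) = 0
    simp
  map_mul' g h := by
    refine Subtype.ext (LinearMap.ext fun v => LinearMap.ext fun w => ?_)
    obtain ⟨v, rfl⟩ := Submodule.Quotient.mk_surjective L v
    obtain ⟨w, rfl⟩ := Submodule.Quotient.mk_surjective L w
    change B v ((g.1 * h.1) w - w) = B v (g.1 w - w) + B v (h.1 w - w)
    rw [mul_apply_sub_of_mem_unipotentRadical g.2 h.2, map_add]

theorem unipotentRadicalToSymm_apply_mk {k V : Type} [Field k] [AddCommGroup V] [Module k V]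
    {B : V →ₗ[k] V →ₗ[k] k} (hB : B.IsAlt) {L : Submodule k V}
    (hL : ∀ x ∈ L, ∀ y ∈ L, B x y = 0) (g : unipotentRadical B L) (v w : V) :
    (Multiplicative.toAdd (unipotentRadicalToSymm hB hL g)).val
      (Submodule.Quotient.mk v) (Submodule.Quotient.mk w) = B v (g.1 w - w) :=
  rfl

theorem unipotentRadicalToSymm_injective {k V : Type} [Field k] [AddCommGroup V] [Module k V]
    {B : V →ₗ[k] V →ₗ[k] k} (hB : B.IsAlt) (hsep : B.SeparatingRight) {L : Submodule k V}
    (hL : ∀ x ∈ L, ∀ y ∈ L, B x y = 0) :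
    Function.Injective (unipotentRadicalToSymm hB hL) := by
  intro g h hgh
  refine Subtype.ext (LinearEquiv.ext fun w => ?_)
  refine sub_left_injective (b := w) (sub_eq_zero.mp (hsep _ fun v => ?_))
  rw [map_sub, sub_eq_zero, ← unipotentRadicalToSymm_apply_mk hB hL g,
    ← unipotentRadicalToSymm_apply_mk hB hL h, hgh]

/-- The automorphism `1 + n` attached to a square-zero endomorphism `n`, with inverse `1 - n`. -/
def idAddEquiv {R V : Type*} [CommRing R] [AddCommGroup V] [Module R V] (n : V →ₗ[R] V)
    (hn : ∀ v, n (n v) = 0) : V ≃ₗ[R] V :=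
  LinearEquiv.ofLinearMap (LinearMap.id + n) (LinearMap.id - n)
    (by ext v; simp [hn]) (by ext v; simp [hn])

theorem unipotentRadicalToSymm_surjective {k V : Type} [Field k] [AddCommGroup V] [Module k V]
    [FiniteDimensional k V] {B : V →ₗ[k] V →ₗ[k] k} (hB : B.IsAlt) (hsep : B.SeparatingRight)
    {L : Submodule k V} (hL : ∀ x ∈ L, ∀ y ∈ L, B x y = 0)
    (hmax : ∀ v, (∀ x ∈ L, B v x = 0) → v ∈ L) :
    Function.Surjective (unipotentRadicalToSymm hB hL) := by
  intro Q
  obtain ⟨Q, hQ⟩ := Q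
  let D : V ≃ₗ[k] Module.Dual k V := LinearEquiv.ofInjectiveOfFinrankEq B.flip
    (LinearMap.ker_eq_bot.mp (separatingRight_iff_flip_ker_eq_bot.mp hsep))
    Subspace.dual_finrank_eq.symm
  let n : V →ₗ[k] V := D.symm.toLinearMap ∘ₗ (Q.compl₁₂ L.mkQ L.mkQ).flip
  have hn (v w : V) : B v (n w) = Q (Submodule.Quotient.mk v) (Submodule.Quotient.mk w) :=
    LinearMap.congr_fun (D.apply_symm_apply ((Q.compl₁₂ L.mkQ L.mkQ).flip w)) v
  have hnL (x : V) (hx : x ∈ L) : n x = 0 := hsep _ fun v => by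
    rw [hn, (Submodule.Quotient.mk_eq_zero L).mpr hx, map_zero]
  have hn_mem (v : V) : n v ∈ L := hmax _ fun x hx => by
    rw [← hB.neg, hn, (Submodule.Quotient.mk_eq_zero L).mpr hx, map_zero, zero_apply, neg_zero]
  let g : V ≃ₗ[k] V := idAddEquiv n fun v => hnL _ (hn_mem v)
  have hg (v : V) : g v = v + n v := rfl
  have hgn (v : V) : g v - v = n v := by rw [hg, add_sub_cancel_left]
  refine ⟨⟨g, fun v w => ?_, fun x hx => by rw [hg, hnL x hx, add_zero],
    fun v => by rw [hgn]; exact hn_mem v⟩, ?_⟩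
  · have hanti := hB.neg w (n v)
    have hsymm := hQ (Submodule.Quotient.mk v) (Submodule.Quotient.mk w)
    rw [← hn, ← hn] at hsymm
    simp only [hg, map_add, add_apply, hL _ (hn_mem v) _ (hn_mem w)]
    linear_combination hsymm - hanti
  · refine Subtype.ext (LinearMap.ext fun v => LinearMap.ext fun w => ?_)
    obtain ⟨v, rfl⟩ := Submodule.Quotient.mk_surjective L v
    obtain ⟨w, rfl⟩ := Submodule.Quotient.mk_surjective L w
    exact (congrArg (B v) (hgn w)).trans (hn v w)

end LinearMap

/-- Let `B` be a nondegenerate alternating bilinear form on a finite-dimensional vector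
space `V` over a field `k`, and let `L ⊆ V` be a Lagrangian subspace
(`L = {v | B(v, x) = 0 ∀ x ∈ L}`).  The set `U` of linear automorphisms `g` of `V`
preserving `B`, fixing `L` pointwise, and with `g v - v ∈ L` for all `v`, is a subgroup of
the group of linear automorphisms of `V`; and the map `Φ` sending `g` to the bilinear form
`(v + L, w + L) ↦ B(v, g w - w)` on `V/L` is well defined and is a group isomorphism from
`U` onto the additive group of symmetric bilinear forms on `V/L`. -/
theorem unipotentRadical_iso_symmForms (k : Type) [Field k]
    (V : Type) [AddCommGroup V] [Module k V] [FiniteDimensional k V]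
    (B : V →ₗ[k] V →ₗ[k] k)
    (halt : ∀ v : V, B v v = 0)
    (hnd : ∀ v : V, (∀ w : V, B v w = 0) → v = 0)
    (L : Submodule k V)
    (hL : ∀ v : V, v ∈ L ↔ ∀ x ∈ L, B v x = 0) :
    ∃ H : Subgroup (V ≃ₗ[k] V),
      (∀ g : V ≃ₗ[k] V, g ∈ H ↔
        ((∀ v w : V, B (g v) (g w) = B v w) ∧ (∀ x ∈ L, g x = x) ∧ ∀ v : V, g v - v ∈ L)) ∧
      ∃ Φ : H ≃* Multiplicative (symmBilinForms k (V ⧸ L)),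
        ∀ (g : H) (v w : V),
          (Multiplicative.toAdd (Φ g)).val
              (Submodule.Quotient.mk v) (Submodule.Quotient.mk w)
            = B v ((g : V ≃ₗ[k] V) w - w) := by
  have hB : B.IsAlt := halt
  have hsep : B.SeparatingRight := fun w hw => hnd w fun v => by rw [← hB.neg, hw, neg_zero]
  have hiso : ∀ x ∈ L, ∀ y ∈ L, B x y = 0 := fun x hx => (hL x).mp hx
  exact ⟨LinearMap.unipotentRadical B L, fun _ => Iff.rfl,
    MulEquiv.ofBijective (LinearMap.unipotentRadicalToSymm hB hiso)
      ⟨LinearMap.unipotentRadicalToSymm_injective hB hsep hiso,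
        LinearMap.unipotentRadicalToSymm_surjective hB hsep hiso fun v => (hL v).mpr⟩,
    LinearMap.unipotentRadicalToSymm_apply_mk hB hiso⟩
end

section
/- Define the bilinear form ⟨x, y⟩_E := (x·y^q + x^q·y)/2 on K. Let (e₁, e₂) and (f₁, f₂) be pairs of elements of K, each pair linearly independent over F_q. Then ⟨e_i, e_j⟩_E = ⟨f_i, f_j⟩_E for all i, j ∈ {1,2} if and only if there exists λ ∈ K with λ^{q+1} = 1 such that either (f₁, f₂) = (λe₁, λe₂) or (f₁, f₂) = (λe₁^q, λe₂^q). -/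
/-- Let `K` be a field with `q²` elements (`q` an odd prime power), with the symmetric
bilinear form `⟨x, y⟩_E = (x y^q + x^q y)/2` corresponding to the norm.  Let `(e₁, e₂)` and
`(f₁, f₂)` be pairs of elements of `K`, each linearly independent over the subfield
`F_q = {x | x^q = x}`.  Then `⟨e_i, e_j⟩_E = ⟨f_i, f_j⟩_E` for all `i, j` if and only if
there is a norm-one `λ` (`λ^(q+1) = 1`) with `(f₁, f₂) = (λe₁, λe₂)` or
`(f₁, f₂) = (λe₁^q, λe₂^q)`. -/
theorem gram_eq_iff_O2_orbit (q : ℕ)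
    (hq : ∃ p n : ℕ, p.Prime ∧ Odd p ∧ 0 < n ∧ q = p ^ n)
    (K : Type) [Field K] [Fintype K] (hK : Fintype.card K = q ^ 2)
    (e₁ e₂ f₁ f₂ : K)
    (he : ∀ a b : K, a ^ q = a → b ^ q = b → a * e₁ + b * e₂ = 0 → a = 0 ∧ b = 0)
    (hf : ∀ a b : K, a ^ q = a → b ^ q = b → a * f₁ + b * f₂ = 0 → a = 0 ∧ b = 0) :
    ((e₁ * e₁ ^ q + e₁ ^ q * e₁) / 2 = (f₁ * f₁ ^ q + f₁ ^ q * f₁) / 2 ∧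
     (e₁ * e₂ ^ q + e₁ ^ q * e₂) / 2 = (f₁ * f₂ ^ q + f₁ ^ q * f₂) / 2 ∧
     (e₂ * e₁ ^ q + e₂ ^ q * e₁) / 2 = (f₂ * f₁ ^ q + f₂ ^ q * f₁) / 2 ∧
     (e₂ * e₂ ^ q + e₂ ^ q * e₂) / 2 = (f₂ * f₂ ^ q + f₂ ^ q * f₂) / 2) ↔
    (∃ l : K, l ^ (q + 1) = 1 ∧
      ((f₁ = l * e₁ ∧ f₂ = l * e₂) ∨ (f₁ = l * e₁ ^ q ∧ f₂ = l * e₂ ^ q))) := by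
  obtain ⟨p, n, hp, hodd, -, rfl⟩ := hq
  set q := p ^ n
  have hq0 : q ≠ 0 := pow_ne_zero _ hp.ne_zero
  have h2 : (2 : K) ≠ 0 := by
    refine Ring.two_ne_zero fun h => ?_
    have hcard := FiniteField.even_card_of_char_two h
    rw [hK, ← Nat.even_iff] at hcard
    exact Nat.not_even_iff_odd.mpr hodd.pow.pow hcard
  have conj_conj : ∀ x : K, (x ^ q) ^ q = x := fun x => by
    rw [← pow_mul, ← sq, ← hK, FiniteField.pow_card]
  have he₁ : e₁ ≠ 0 := by
    rintro rfl
    exact one_ne_zero (he 1 0 (one_pow q) (zero_pow hq0) (by simp)).1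
  have hE₁ : e₁ ^ q ≠ 0 := pow_ne_zero _ he₁
  simp only [div_left_inj' h2]
  constructor
  · rintro ⟨h₁₁, h₁₂, -, h₂₂⟩
    have hN₁ : e₁ * e₁ ^ q = f₁ * f₁ ^ q := mul_left_cancel₀ h2 (by linear_combination h₁₁)
    have hN₂ : e₂ * e₂ ^ q = f₂ * f₂ ^ q := mul_left_cancel₀ h2 (by linear_combination h₂₂)
    -- `e₁ * e₂ ^ q`, `e₁ ^ q * e₂` and `f₁ * f₂ ^ q`, `f₁ ^ q * f₂` have equal sums and products
    have hroot : (f₁ ^ q * f₂ - e₁ ^ q * e₂) * (f₁ ^ q * f₂ - e₁ * e₂ ^ q) = 0 := by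
      linear_combination -(f₁ ^ q * f₂) * h₁₂ + e₂ * e₂ ^ q * hN₁ + f₁ * f₁ ^ q * hN₂
    rcases mul_eq_zero.mp hroot with h | h
    · refine ⟨f₁ / e₁, ?_, Or.inl ⟨by field_simp, ?_⟩⟩
      · rw [div_pow, pow_succ', pow_succ', ← hN₁, div_self (mul_ne_zero he₁ hE₁)]
      · rw [div_mul_eq_mul_div, eq_div_iff he₁]
        exact mul_right_cancel₀ hE₁ (by linear_combination f₁ * h + f₂ * hN₁)
    · refine ⟨f₁ / e₁ ^ q, ?_, Or.inr ⟨by field_simp, ?_⟩⟩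
      · rw [div_pow, pow_succ', pow_succ', conj_conj, ← hN₁, mul_comm,
          div_self (mul_ne_zero hE₁ he₁)]
      · rw [div_mul_eq_mul_div, eq_div_iff hE₁]
        exact mul_right_cancel₀ he₁ (by linear_combination f₁ * h + f₂ * hN₁)
  · rintro ⟨l, hl, ⟨rfl, rfl⟩ | ⟨rfl, rfl⟩⟩ <;> rw [pow_succ'] at hl <;>
      simp only [mul_pow, conj_conj]
    · refine ⟨?_, ?_, ?_, ?_⟩
      · linear_combination -(e₁ * e₁ ^ q + e₁ ^ q * e₁) * hl
      · linear_combination -(e₁ * e₂ ^ q + e₁ ^ q * e₂) * hl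
      · linear_combination -(e₂ * e₁ ^ q + e₂ ^ q * e₁) * hl
      · linear_combination -(e₂ * e₂ ^ q + e₂ ^ q * e₂) * hl
    · refine ⟨?_, ?_, ?_, ?_⟩
      · linear_combination -(e₁ * e₁ ^ q + e₁ ^ q * e₁) * hl
      · linear_combination -(e₁ * e₂ ^ q + e₁ ^ q * e₂) * hl
      · linear_combination -(e₂ * e₁ ^ q + e₂ ^ q * e₁) * hl
      · linear_combination -(e₂ * e₂ ^ q + e₂ ^ q * e₂) * hl
end

section
/- Let ψ be a nontrivial homomorphism from the additive group of F_q to ℂˣ. Suppose f : K × K → ℂ satisfies: (i) f(λe₁, λe₂) = f(e₁,e₂) for all λ ∈ μ_{q+1}; (ii) f(e₁^q, e₂^q) = −f(e₁,e₂) for all (e₁,e₂); and (iii) ψ(c·e₂^{q+1})·f(e₁,e₂) = f(e₁,e₂) for all c ∈ F_q and all (e₁,e₂) ∈ K × K (note that e₂^{q+1} lies in the subfield F_q). Then f = 0. -/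
/-- Let `K` be a field with `q²` elements (`q` an odd prime power) and let `ψ` be a
nontrivial (ℂˣ-valued) character of the additive group of the subfield
`F_q = {x ∈ K | x^q = x}`.  If `f : K × K → ℂ` is invariant under the norm-one subgroup
`μ_{q+1}`, anti-invariant under the coordinatewise Frobenius, and satisfies
`ψ(c · e₂^(q+1)) f(e₁, e₂) = f(e₁, e₂)` for all `c ∈ F_q`, then `f = 0`. -/
theorem WoneMinus_no_fixed_vector (q : ℕ)
    (hq : ∃ p n : ℕ, p.Prime ∧ Odd p ∧ 0 < n ∧ q = p ^ n)
    (K : Type) [Field K] [Fintype K] (hK : Fintype.card K = q ^ 2)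
    (ψ : K → ℂ)
    (hψmul : ∀ a b : K, a ^ q = a → b ^ q = b → ψ (a + b) = ψ a * ψ b)
    (hψne : ∀ a : K, a ^ q = a → ψ a ≠ 0)
    (hψnontriv : ∃ a : K, a ^ q = a ∧ ψ a ≠ 1)
    (f : K × K → ℂ)
    (h1 : ∀ l e₁ e₂ : K, l ^ (q + 1) = 1 → f (l * e₁, l * e₂) = f (e₁, e₂))
    (h2 : ∀ e₁ e₂ : K, f (e₁ ^ q, e₂ ^ q) = - f (e₁, e₂))
    (h3 : ∀ c e₁ e₂ : K, c ^ q = c → ψ (c * e₂ ^ (q + 1)) * f (e₁, e₂) = f (e₁, e₂)) :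
    f = 0 := by
  obtain ⟨p, n, hp, -, -, rfl⟩ := hq
  set q := p ^ n
  have hq0 : q ≠ 0 := pow_ne_zero n hp.ne_zero
  have hfrob : ∀ x : K, (x ^ q) ^ q = x := fun x => by
    rw [← pow_mul, ← sq, ← hK, FiniteField.pow_card]
  funext ⟨e₁, e₂⟩
  change f (e₁, e₂) = 0
  by_cases he₂ : e₂ = 0
  · subst he₂
    have hinv : f (e₁ ^ q, 0) = f (e₁, 0) := by
      by_cases he₁ : e₁ = 0
      · rw [he₁, zero_pow hq0]
      · have hl : e₁ ^ q / e₁ * e₁ = e₁ ^ q := div_mul_cancel₀ _ he₁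
        have hnorm : (e₁ ^ q / e₁) ^ (q + 1) = 1 := by
          rw [pow_succ, div_pow, hfrob]
          have := pow_ne_zero q he₁
          field_simp
        simpa [hl] using h1 _ e₁ 0 hnorm
    have hanti := h2 e₁ 0
    rw [zero_pow hq0, hinv] at hanti
    exact self_eq_neg.mp hanti
  · obtain ⟨a, ha, hψa⟩ := hψnontriv
    have hN : e₂ ^ (q + 1) ≠ 0 := pow_ne_zero _ he₂
    have hNq : (e₂ ^ (q + 1)) ^ q = e₂ ^ (q + 1) := by
      rw [pow_succ, mul_pow, hfrob, mul_comm]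
    have h := h3 (a / e₂ ^ (q + 1)) e₁ e₂ (by rw [div_pow, hNq, ha])
    rw [div_mul_cancel₀ _ hN] at h
    by_contra hf
    exact hψa (mul_eq_right₀ hf |>.mp h)
end

section
/- Let γ ∈ E be a unit with γ^{q²+1} = 1, γ ≠ 1 and γ ≠ −1, and let t ∈ E be a unit with t^{q+1} = 1. Then there exists x ∈ E with x^q = x, x ≠ 0, and (tγ−1)(tγ^q−1)(tγ⁻¹−1)(t(γ^q)⁻¹−1)(t⁻¹γ−1)(t⁻¹γ^q−1)(t⁻¹γ⁻¹−1)(t⁻¹(γ^q)⁻¹−1) = x²; in other words this product is the square of a nonzero element of the subfield of E with q elements. -/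
/-- Let `E` be a field with `q⁴` elements (`q` an odd prime power), let `γ ∈ E` with
`γ^(q²+1) = 1`, `γ ≠ ±1`, and let `t ∈ E` with `t^(q+1) = 1`.  Then the product
`∏ (t^{±1} γ^{±1} - 1)(t^{±1} γ^{±q} - 1)` (eight factors) is the square of a nonzero
element of the subfield `F_q = {x ∈ E | x^q = x}`. -/
theorem det_is_square_in_Fq (q : ℕ)
    (hq : ∃ p n : ℕ, p.Prime ∧ Odd p ∧ 0 < n ∧ q = p ^ n)
    (E : Type) [Field E] [Fintype E] (hE : Fintype.card E = q ^ 4)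
    (γ : E) (hγ0 : γ ≠ 0) (hγ : γ ^ (q ^ 2 + 1) = 1) (hγ1 : γ ≠ 1) (hγ2 : γ ≠ -1)
    (t : E) (ht0 : t ≠ 0) (ht : t ^ (q + 1) = 1) :
    ∃ x : E, x ^ q = x ∧ x ≠ 0 ∧
      (t * γ - 1) * (t * γ ^ q - 1) * (t * γ⁻¹ - 1) * (t * (γ ^ q)⁻¹ - 1) *
      (t⁻¹ * γ - 1) * (t⁻¹ * γ ^ q - 1) * (t⁻¹ * γ⁻¹ - 1) * (t⁻¹ * (γ ^ q)⁻¹ - 1)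
        = x ^ 2 := by
  obtain ⟨p, n, hp, -, -, rfl⟩ := hq
  have : Fact p.Prime := ⟨hp⟩
  have : CharP E p := charP_of_card_eq_prime_pow (f := n * 4) (by rw [hE, pow_mul])
  set q := p ^ n
  have sub_q (a b : E) : (a - b) ^ q = a ^ q - b ^ q := sub_pow_char_pow a b n
  have add_q (a b : E) : (a + b) ^ q = a ^ q + b ^ q := add_pow_char_pow a b p n
  have htq : t ^ q = t⁻¹ := eq_inv_of_mul_eq_one_left (by rw [← pow_succ, ht])
  have hγqq : (γ ^ q) ^ q = γ⁻¹ :=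
    eq_inv_of_mul_eq_one_left (by rw [← pow_mul, ← sq, ← pow_succ, hγ])
  have hs : (t + t⁻¹) ^ q = t + t⁻¹ := by
    rw [add_q, inv_pow, htq, inv_inv, add_comm]
  have hc : (γ + γ⁻¹) ^ q = γ ^ q + (γ ^ q)⁻¹ := by rw [add_q, inv_pow]
  have hd : (γ ^ q + (γ ^ q)⁻¹) ^ q = γ + γ⁻¹ := by
    rw [add_q, inv_pow, hγqq, inv_inv, add_comm]
  have hγq : γ ^ q ≠ γ⁻¹ := by
    intro h
    have hsq : γ * γ = 1 := by
      rw [h, inv_pow, h, inv_inv] at hγqq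
      nth_rw 1 [hγqq]
      exact inv_mul_cancel₀ hγ0
    exact (mul_self_eq_one_iff.mp hsq).elim hγ1 hγ2
  have hsc : t + t⁻¹ - (γ + γ⁻¹) ≠ 0 := by
    intro h
    have hfac : (t - γ) * (t - γ⁻¹) = 0 := by
      have : (t - γ) * (t - γ⁻¹) = t * (t + t⁻¹ - (γ + γ⁻¹)) := by
        field_simp
        ring
      rw [this, h, mul_zero]
    rcases mul_eq_zero.mp hfac with h | h
    · exact hγq (sub_eq_zero.mp h ▸ htq)
    · rw [sub_eq_zero.mp h, inv_pow] at htq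
      exact hγq (inv_injective htq)
  have hsd : t + t⁻¹ - (γ ^ q + (γ ^ q)⁻¹) ≠ 0 := by
    rw [← hc, ← hs, ← sub_q]
    exact pow_ne_zero _ hsc
  refine ⟨(t + t⁻¹ - (γ + γ⁻¹)) * (t + t⁻¹ - (γ ^ q + (γ ^ q)⁻¹)), ?_,
    mul_ne_zero hsc hsd, ?_⟩
  · rw [mul_pow, sub_q, sub_q, hs, hc, hd, mul_comm]
  · have hδ0 : γ ^ q ≠ 0 := pow_ne_zero _ hγ0
    generalize γ ^ q = δ at hδ0
    field_simp
    ring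
end

section
/- Let γ ∈ E be a unit with γ^{q²+1} = 1, γ ≠ 1 and γ ≠ −1. Set y := (γ − γ⁻¹)(γ^q − γ^{−q}) ∈ E. Then (1−γ²)(1−γ^{2q})(1−γ^{−2})(1−γ^{−2q}) = y², y ≠ 0, y^q = −y, and consequently for every x ∈ E with x^q = x one has (1−γ²)(1−γ^{2q})(1−γ^{−2})(1−γ^{−2q}) ≠ x²; in other words this product is not the square of any element of the subfield of E with q elements. -/
/-- In characteristic `p`, raising to a power of `p` commutes with `a ↦ a - a⁻¹`. -/
lemma sub_inv_pow_char_pow {E : Type*} [Field E] (p n : ℕ) [Fact p.Prime] [CharP E p] (a : E) :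
    (a - a⁻¹) ^ p ^ n = a ^ p ^ n - (a ^ p ^ n)⁻¹ := by
  rw [sub_pow_char_pow, inv_pow]

lemma one_sub_sq_mul_one_sub_sq_inv {E : Type*} [Field E] {a : E} (ha : a ≠ 0) :
    (1 - a ^ 2) * (1 - (a ^ 2)⁻¹) = -(a - a⁻¹) ^ 2 := by
  field_simp
  ring

lemma sub_inv_ne_zero_of_ne_one_of_ne_neg_one {E : Type*} [Field E] {a : E} (ha : a ≠ 0)
    (h1 : a ≠ 1) (h2 : a ≠ -1) : a - a⁻¹ ≠ 0 := by
  intro h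
  have hsq : a * a = 1 := by
    nth_rewrite 2 [sub_eq_zero.mp h]
    exact mul_inv_cancel₀ ha
  exact (mul_self_eq_one_iff.mp hsq).elim h1 h2

/-- If `y ≠ 0` and `y ^ q = -y` with `q` odd, then `y ^ 2` is not the square of an element
fixed by `x ↦ x ^ q`. -/
lemma sq_ne_sq_of_pow_eq_neg {E : Type*} [Field E] (h2 : (2 : E) ≠ 0) {q : ℕ} (hq : Odd q)
    {x y : E} (hy : y ≠ 0) (hyq : y ^ q = -y) (hx : x ^ q = x) : y ^ 2 ≠ x ^ 2 := by
  intro h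
  have hfix : y ^ q = y := by
    rcases sq_eq_sq_iff_eq_or_eq_neg.mp h with rfl | rfl
    · exact hx
    · rw [hq.neg_pow, hx]
  have hzero : 2 * y = 0 := by linear_combination hyq - hfix
  exact (mul_ne_zero h2 hy) hzero

/-- Let `E` be a field with `q⁴` elements (`q` an odd prime power) and let `γ ∈ E` with
`γ^(q²+1) = 1`, `γ ≠ ±1`.  Set `y = (γ - γ⁻¹)(γ^q - γ^{-q})`.  Then
`(1-γ²)(1-γ^{2q})(1-γ^{-2})(1-γ^{-2q}) = y²`, `y ≠ 0`, `y^q = -y`, and consequently this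
product is not the square of any element `x` of the subfield `F_q = {x ∈ E | x^q = x}`. -/
theorem det_is_nonsquare_in_Fq (q : ℕ)
    (hq : ∃ p n : ℕ, p.Prime ∧ Odd p ∧ 0 < n ∧ q = p ^ n)
    (E : Type) [Field E] [Fintype E] (hE : Fintype.card E = q ^ 4)
    (γ : E) (hγ0 : γ ≠ 0) (hγ : γ ^ (q ^ 2 + 1) = 1) (hγ1 : γ ≠ 1) (hγ2 : γ ≠ -1) :
    (1 - γ ^ 2) * (1 - γ ^ (2 * q)) * (1 - (γ ^ 2)⁻¹) * (1 - (γ ^ (2 * q))⁻¹)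
        = ((γ - γ⁻¹) * (γ ^ q - (γ ^ q)⁻¹)) ^ 2 ∧
    (γ - γ⁻¹) * (γ ^ q - (γ ^ q)⁻¹) ≠ 0 ∧
    ((γ - γ⁻¹) * (γ ^ q - (γ ^ q)⁻¹)) ^ q = -((γ - γ⁻¹) * (γ ^ q - (γ ^ q)⁻¹)) ∧
    ∀ x : E, x ^ q = x →
      (1 - γ ^ 2) * (1 - γ ^ (2 * q)) * (1 - (γ ^ 2)⁻¹) * (1 - (γ ^ (2 * q))⁻¹) ≠ x ^ 2 := by
  obtain ⟨p, n, hp, hpodd, -, rfl⟩ := hq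
  have : Fact p.Prime := ⟨hp⟩
  have : CharP E p := charP_of_card_eq_prime_pow (f := n * 4) (by rw [hE, pow_mul])
  have h2 : (2 : E) ≠ 0 :=
    Ring.two_ne_zero (by rw [ringChar.eq E p]; rintro rfl; exact absurd hpodd (by decide))
  have hfrob := sub_inv_pow_char_pow p n γ
  have hγq : (γ ^ p ^ n) ^ p ^ n = γ⁻¹ := by
    rw [← pow_mul, ← sq]
    exact eq_inv_of_mul_eq_one_left (by rw [← pow_succ, hγ])
  have hfrob' := sub_inv_pow_char_pow p n (γ ^ p ^ n)
  rw [hγq, inv_inv] at hfrob'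
  have hsub := sub_inv_ne_zero_of_ne_one_of_ne_neg_one hγ0 hγ1 hγ2
  have hprod : (1 - γ ^ 2) * (1 - γ ^ (2 * p ^ n)) * (1 - (γ ^ 2)⁻¹) * (1 - (γ ^ (2 * p ^ n))⁻¹)
      = ((γ - γ⁻¹) * (γ ^ p ^ n - (γ ^ p ^ n)⁻¹)) ^ 2 := by
    have e1 := one_sub_sq_mul_one_sub_sq_inv hγ0
    have e2 := one_sub_sq_mul_one_sub_sq_inv (pow_ne_zero (p ^ n) hγ0)
    rw [mul_comm 2, pow_mul, mul_right_comm (1 - γ ^ 2), e1, mul_assoc, e2]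
    ring
  have hy : (γ - γ⁻¹) * (γ ^ p ^ n - (γ ^ p ^ n)⁻¹) ≠ 0 :=
    mul_ne_zero hsub (hfrob ▸ pow_ne_zero _ hsub)
  have hyq : ((γ - γ⁻¹) * (γ ^ p ^ n - (γ ^ p ^ n)⁻¹)) ^ p ^ n
      = -((γ - γ⁻¹) * (γ ^ p ^ n - (γ ^ p ^ n)⁻¹)) := by
    rw [mul_pow, hfrob, hfrob']
    ring
  exact ⟨hprod, hy, hyq, fun x hx => hprod ▸ sq_ne_sq_of_pow_eq_neg h2 hpodd.pow hy hyq hx⟩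
end

section
/- Let U₀ be the set of 4×4 matrices over F_q of the form with rows (1, −α, β, μ), (0, 1, λ, λα+β), (0, 0, 1, α), (0, 0, 0, 1), where α, β, λ, μ range over F_q. Then U₀ is a subgroup of GL₄(F_q) of order q⁴; its commutator subgroup equals U₀' := {matrices of this form with α = λ = 0}; and its center equals U₀'' := {matrices of this form with α = β = λ = 0}. -/
open Matrix

/-- The unipotent upper-triangular matrices of `Sp(4, F)`:
rows `(1, -α, β, μ)`, `(0, 1, λ, λα+β)`, `(0, 0, 1, α)`, `(0, 0, 0, 1)`. -/
def U0mat (F : Type) [Field F] (α β l μ : F) : Matrix (Fin 4) (Fin 4) F :=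
  !![1, -α, β, μ; 0, 1, l, l * α + β; 0, 0, 1, α; 0, 0, 0, 1]

namespace U0mat

variable {F : Type} [Field F]

theorem mul (a b l m a' b' l' m' : F) :
    U0mat F a b l m * U0mat F a' b' l' m' =
      U0mat F (a + a') (b + b' - a * l') (l + l') (m + m' - a * l' * a' - a * b' + b * a') := by
  ext i j
  fin_cases i <;> fin_cases j <;> simp [U0mat, Matrix.mul_apply, Fin.sum_univ_four] <;> ring

theorem zero : U0mat F 0 0 0 0 = 1 := by
  ext i j
  fin_cases i <;> fin_cases j <;> simp [U0mat]

theorem inj {a b l m a' b' l' m' : F} (h : U0mat F a b l m = U0mat F a' b' l' m') :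
    a = a' ∧ b = b' ∧ l = l' ∧ m = m' := by
  have entry (i j : Fin 4) := congrFun (congrFun h i) j
  exact ⟨by simpa [U0mat] using entry 2 3, by simpa [U0mat] using entry 0 2,
    by simpa [U0mat] using entry 1 2, by simpa [U0mat] using entry 0 3⟩

/-- `U0mat F a b l m` as an invertible matrix. -/
def toGL (a b l m : F) : GL (Fin 4) F where
  val := U0mat F a b l m
  inv := U0mat F (-a) (-b - a * l) (-l) (-m)
  val_inv := by rw [mul, ← zero]; congr 1 <;> ring
  inv_val := by rw [mul, ← zero]; congr 1 <;> ring

theorem toGL_mul (a b l m a' b' l' m' : F) :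
    toGL a b l m * toGL a' b' l' m' =
      toGL (a + a') (b + b' - a * l') (l + l') (m + m' - a * l' * a' - a * b' + b * a') :=
  Units.ext (mul ..)

theorem toGL_inv (a b l m : F) :
    (toGL a b l m)⁻¹ = toGL (-a) (-b - a * l) (-l) (-m) :=
  Units.ext rfl

theorem toGL_zero : toGL (0 : F) 0 0 0 = 1 :=
  Units.ext zero

theorem toGL_inj {a b l m a' b' l' m' : F} :
    toGL a b l m = toGL a' b' l' m' ↔ a = a' ∧ b = b' ∧ l = l' ∧ m = m' :=
  ⟨fun h => inj (congrArg Units.val h), by rintro ⟨rfl, rfl, rfl, rfl⟩; rfl⟩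

theorem coe_eq_iff {g : GL (Fin 4) F} {a b l m : F} :
    (g : Matrix (Fin 4) (Fin 4) F) = U0mat F a b l m ↔ g = toGL a b l m :=
  ⟨fun h => Units.ext h, by rintro rfl; rfl⟩

variable (F) in
/-- The unipotent subgroup of all matrices `U0mat F a b l m`. -/
def subgroup : Subgroup (GL (Fin 4) F) where
  carrier := {g | ∃ a b l m : F, g = toGL a b l m}
  one_mem' := ⟨0, 0, 0, 0, toGL_zero.symm⟩
  mul_mem' := by
    rintro _ _ ⟨a, b, l, m, rfl⟩ ⟨a', b', l', m', rfl⟩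
    exact ⟨_, _, _, _, toGL_mul ..⟩
  inv_mem' := by
    rintro _ ⟨a, b, l, m, rfl⟩
    exact ⟨_, _, _, _, toGL_inv ..⟩

theorem mem_subgroup {g : GL (Fin 4) F} :
    g ∈ subgroup F ↔ ∃ a b l m : F, g = toGL a b l m :=
  Iff.rfl

theorem toGL_mem (a b l m : F) : toGL a b l m ∈ subgroup F :=
  ⟨a, b, l, m, rfl⟩

variable (F) in
/-- The subgroup of all matrices `U0mat F 0 b 0 m`. -/
def derivedSubgroup : Subgroup (GL (Fin 4) F) where
  carrier := {g | ∃ b m : F, g = toGL 0 b 0 m}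
  one_mem' := ⟨0, 0, toGL_zero.symm⟩
  mul_mem' := by
    rintro _ _ ⟨b, m, rfl⟩ ⟨b', m', rfl⟩
    exact ⟨b + b', m + m', by rw [toGL_mul]; simp⟩
  inv_mem' := by
    rintro _ ⟨b, m, rfl⟩
    exact ⟨-b, -m, by rw [toGL_inv]; simp⟩

theorem mem_derivedSubgroup {g : GL (Fin 4) F} :
    g ∈ derivedSubgroup F ↔ ∃ b m : F, g = toGL 0 b 0 m :=
  Iff.rfl

variable (F) in
theorem card_subgroup : Nat.card (subgroup F) = Nat.card F ^ 4 := by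
  let e : F × F × F × F → subgroup F :=
    fun x => ⟨toGL x.1 x.2.1 x.2.2.1 x.2.2.2, toGL_mem ..⟩
  have he : Function.Bijective e := by
    refine ⟨fun x y hxy => ?_, ?_⟩
    · obtain ⟨h₁, h₂, h₃, h₄⟩ := toGL_inj.1 (congrArg Subtype.val hxy)
      exact Prod.ext h₁ (Prod.ext h₂ (Prod.ext h₃ h₄))
    · rintro ⟨_, a, b, l, m, rfl⟩
      exact ⟨(a, b, l, m), rfl⟩
  rw [← Nat.card_eq_of_bijective e he]
  simp only [Nat.card_prod]
  ring

open scoped commutatorElement in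
theorem commutator_subgroup (h2 : (2 : F) ≠ 0) :
    ⁅subgroup F, subgroup F⁆ = derivedSubgroup F := by
  apply le_antisymm
  · rw [Subgroup.commutator_le]
    rintro _ ⟨a, b, l, m, rfl⟩ _ ⟨a', b', l', m', rfl⟩
    rw [mem_derivedSubgroup, commutatorElement_def]
    simp only [toGL_inv, toGL_mul, toGL_inj]
    exact ⟨_, _, by ring, rfl, by ring, rfl⟩
  · rintro _ ⟨b, m, rfl⟩
    have key : toGL 0 b 0 m =
        ⁅toGL (1 : F) 0 0 0, toGL 0 0 (-b) 0⁆ *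
          ⁅toGL (1 : F) 0 0 0, toGL 0 (-(m + b) / 2) 0 0⁆ := by
      simp only [commutatorElement_def, toGL_inv, toGL_mul, toGL_inj]
      refine ⟨?_, ?_, ?_, ?_⟩ <;> field_simp <;> ring
    rw [key]
    exact mul_mem (Subgroup.commutator_mem_commutator (toGL_mem ..) (toGL_mem ..))
      (Subgroup.commutator_mem_commutator (toGL_mem ..) (toGL_mem ..))

theorem mem_center_iff (h2 : (2 : F) ≠ 0) {g : GL (Fin 4) F} :
    (g ∈ subgroup F ∧ ∀ h ∈ subgroup F, g * h = h * g) ↔ ∃ m : F, g = toGL 0 0 0 m := by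
  constructor
  · rintro ⟨⟨a, b, l, m, rfl⟩, hcomm⟩
    have hx := hcomm _ (toGL_mem 1 0 0 0)
    have hz := hcomm _ (toGL_mem 0 0 1 0)
    simp only [toGL_mul, toGL_inj] at hx hz
    obtain ⟨-, hl, -, hb⟩ := hx
    obtain ⟨-, ha, -, -⟩ := hz
    have ha0 : a = 0 := by linear_combination -ha
    have hl0 : l = 0 := by linear_combination hl
    have hb0 : b = 0 := by
      refine (mul_eq_zero.1 (?_ : 2 * b = 0)).resolve_left h2
      linear_combination hb - a * hl0
    exact ⟨m, by rw [ha0, hl0, hb0]⟩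
  · rintro ⟨m, rfl⟩
    refine ⟨toGL_mem .., ?_⟩
    rintro _ ⟨a', b', l', m', rfl⟩
    simp only [toGL_mul, toGL_inj]
    refine ⟨?_, ?_, ?_, ?_⟩ <;> ring

end U0mat

theorem FiniteField.two_ne_zero_of_odd_card {F : Type*} [Field F] [Fintype F]
    (h : Odd (Fintype.card F)) : (2 : F) ≠ 0 := by
  refine Ring.two_ne_zero fun hchar => ?_
  have := FiniteField.even_card_of_char_two hchar
  rw [Nat.odd_iff] at h
  omega

/-- Let `F` be a field with `q` elements, `q` an odd prime power.  The set `U₀` of matrices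
`U0mat α β λ μ` is a subgroup of `GL₄(F)` of order `q⁴`; its commutator subgroup is
`U₀' = {U0mat 0 β 0 μ}`; and its center is `U₀'' = {U0mat 0 0 0 μ}`. -/
theorem U0_subgroup_commutator_center (q : ℕ)
    (hq : ∃ p n : ℕ, p.Prime ∧ Odd p ∧ 0 < n ∧ q = p ^ n)
    (F : Type) [Field F] [Fintype F] (hF : Fintype.card F = q) :
    ∃ H : Subgroup (GL (Fin 4) F),
      (∀ g : GL (Fin 4) F, g ∈ H ↔ ∃ α β l μ : F, (g : Matrix (Fin 4) (Fin 4) F) = U0mat F α β l μ) ∧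
      Nat.card H = q ^ 4 ∧
      (∀ g : GL (Fin 4) F, g ∈ ⁅H, H⁆ ↔
        ∃ β μ : F, (g : Matrix (Fin 4) (Fin 4) F) = U0mat F 0 β 0 μ) ∧
      (∀ g : GL (Fin 4) F,
        (g ∈ H ∧ ∀ h ∈ H, g * h = h * g) ↔
        ∃ μ : F, (g : Matrix (Fin 4) (Fin 4) F) = U0mat F 0 0 0 μ) := by
  have h2 : (2 : F) ≠ 0 := by
    obtain ⟨p, n, -, hp, -, rfl⟩ := hq
    exact FiniteField.two_ne_zero_of_odd_card (hF ▸ hp.pow)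
  simp only [U0mat.coe_eq_iff]
  refine ⟨U0mat.subgroup F, fun g => U0mat.mem_subgroup, ?_, fun g => ?_,
    fun g => U0mat.mem_center_iff h2⟩
  · rw [U0mat.card_subgroup, Nat.card_eq_fintype_card, hF]
  · rw [U0mat.commutator_subgroup h2, U0mat.mem_derivedSubgroup]
end
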